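/- Fix real exponents p > 1, q > 1 and T > 6p + 1 − 2q. For each n, let f̂_n be the minimum-Σ-weighted-ℓ2-norm Fourier interpolator of constant labels at the n regularly spaced points, and let ĝ_n be the minimum-ℓ2-norm interpolator built on d = n^T random-Fourier-sum (RFS) features whose Gaussian weight vectors are i.i.d. N(0, Σ(n,p,q)). Then the adversarial risk at radius 1/n of ĝ_n converges to that of f̂_n: for every δ > 0, the probability (over the Gaussian weights) that |C_adv(ĝ_n, 1/n) − C_adv(f̂_n, 1/n)| > δ tends to 0 as n → ∞. -/

import Mathlib

open MeasureTheory Filter ProbabilityTheory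

/-- The lifted Fourier feature map `φ : ℝ → ℝ^B`,
`φ(x) = (1/√2, sin (π x), cos (π x), …, sin (((B-1)/2) π x), cos (((B-1)/2) π x))`. -/
noncomputable def phiF (B : ℕ) (x : ℝ) : Fin B → ℝ := fun j =>
  if j.val = 0 then 1 / Real.sqrt 2
  else if j.val % 2 = 1 then Real.sin ((((j.val + 1) / 2 : ℕ) : ℝ) * Real.pi * x)
  else Real.cos (((j.val / 2 : ℕ) : ℝ) * Real.pi * x)

/-- The `n` regularly spaced training points `x_i = -1 + 2 i / n`, `i = 1, …, n`. -/
noncomputable def xtr (n : ℕ) (i : Fin n) : ℝ := -1 + 2 * ((i : ℕ) + 1 : ℝ) / (n : ℝ)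

/-- `α` interpolates the constant labels `1` at the regular grid: `Φ α = (1, …, 1)`. -/
def Interpolates (n B : ℕ) (α : Fin B → ℝ) : Prop :=
  ∀ i : Fin n, ∑ j, α j * phiF B (xtr n i) j = 1

/-- The bilevel diagonal weights: `λ₁ = γ B` with `γ = n^{-q}` on the constant feature,
and `λ_L = (1 - γ) B / (B - 1)` on all other features. -/
noncomputable def bilevelLam (n B : ℕ) (q : ℝ) : Fin B → ℝ := fun j =>
  if j.val = 0 then (n : ℝ) ^ (-q) * (B : ℝ)
  else (1 - (n : ℝ) ^ (-q)) * (B : ℝ) / ((B : ℝ) - 1)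

/-- `α̂` is a minimum-`Σ`-weighted-`ℓ₂`-norm interpolator. -/
def IsMinInterp (n B : ℕ) (lam : Fin B → ℝ) (α : Fin B → ℝ) : Prop :=
  Interpolates n B α ∧
    ∀ α' : Fin B → ℝ, Interpolates n B α' →
      ∑ j, (α j) ^ 2 / lam j ≤ ∑ j, (α' j) ^ 2 / lam j

/-- `B` is the odd integer closest to `n^p` with `2n ∣ B - 1`. -/
def BilevelB (n B : ℕ) (p : ℝ) : Prop :=
  Odd B ∧ 2 * n ∣ B - 1 ∧ |(B : ℝ) - (n : ℝ) ^ p| ≤ (n : ℝ)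

/-- The adversarial classification risk of `f` at radius `ε` against the constant `+1`
ground truth: `C_adv(f, ε) = (1/2) · Leb {x ∈ [-1,1] : ∃ x̃, |x̃ - x| ≤ ε ∧ f(x̃) ≤ 0}`. -/
noncomputable def advRisk (f : ℝ → ℝ) (ε : ℝ) : ℝ :=
  (volume {x ∈ Set.Icc (-1 : ℝ) 1 | ∃ y : ℝ, |y - x| ≤ ε ∧ f y ≤ 0}).toReal / 2

/-- The RFS learned function `ĝ(x) = ∑_i β_i ⟨z_i, φ(x)⟩`, for coefficients `β` on the
RFS features generated by the Gaussian weight matrix `W` (rows `z_i ∈ ℝ^B`). -/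
noncomputable def rfsFun (B d : ℕ) (W : Fin d → Fin B → ℝ) (β : Fin d → ℝ) (x : ℝ) : ℝ :=
  ∑ i, β i * ∑ j, W i j * phiF B x j

/-- `β` interpolates the constant labels `1` on the RFS features: `Φ^RFS β = (1, …, 1)`. -/
def RFSInterpolates (n B d : ℕ) (W : Fin d → Fin B → ℝ) (β : Fin d → ℝ) : Prop :=
  ∀ i : Fin n, rfsFun B d W β (xtr n i) = 1

/-- The distribution of the RFS weight matrix: `d` i.i.d. rows, each row Gaussian
`N(0, Σ(n,p,q))` in `ℝ^B` (with `Σ` diagonal, so the row is a product of scalar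
Gaussians `N(0, λ_j)`). -/
noncomputable def rfsMeasure (n B d : ℕ) (q : ℝ) : Measure (Fin d → Fin B → ℝ) :=
  Measure.pi fun _ : Fin d =>
    Measure.pi fun j : Fin B => gaussianReal 0 (bilevelLam n B q j).toNNReal

/-!
Cut `[-1, 1]` into `2n` cells of length `1/n`. In each cell the Fourier interpolator, which is the
kernel of the weighted features averaged over the grid, dips below `0`, so its risk at radius
`1/n` is `1`, and `ĝ_n` has a different risk only if it stays positive on a whole cell. The number
`K = (B - 1) / 2n` of extra degrees of freedom per cell and the ratio `1 / (γ n)` both grow like a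
power of `n`; let `x` be a smaller power.

If `d ≥ n x`, condition on the features at the training points: at a dip, `ĝ_n` is its mean
(a negative multiple of the norm of a regression residual, hence negative) plus Gaussian noise,
and the residual of `d` Gaussian observations against `n` others concentrates.

If `d ≤ n x`, replace the variance `λ₁` of the constant feature by `λ_L`, at the cost of a density
factor `exp (O (n x log n))`. The features at the `2nK + 1` points of the fine grid are then
independent and symmetric, so all sign patterns are equally likely, while linear combinations of
`d` vectors realise only `(2nK + 1)^d` of the `2^(2nK + 1)` patterns. Hence being positive on many
cells at once has probability `exp (-c n K)` up to smaller factors.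
-/

open scoped Matrix RealInnerProductSpace

section SignPatterns

variable {ι κ : Type*} [Fintype ι]

/-- Some linear combination of the rows of the matrix `S` is positive in every column. -/
def HasPositiveCombination (S : ι → κ → ℝ) : Prop := ∃ β : ι → ℝ, ∀ k, 0 < ∑ i, β i * S i k

open Classical in
/-- The sets of columns cut out by the positivity of a linear combination of the rows of `S`:
the traces on the columns, seen as points of `ℝ^ι`, of the open half-spaces through `0`. -/
noncomputable def halfspaceTraces [Fintype κ] (S : ι → κ → ℝ) : Finset (Finset κ) :=
  {A | ∃ β : ι → ℝ, ∀ k, k ∈ A ↔ 0 < ∑ i, β i * S i k}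

lemma mem_halfspaceTraces [Fintype κ] {S : ι → κ → ℝ} {A : Finset κ} :
    A ∈ halfspaceTraces S ↔ ∃ β : ι → ℝ, ∀ k, k ∈ A ↔ 0 < ∑ i, β i * S i k := by
  simp [halfspaceTraces]

lemma exists_linear_dependence_pos {α : Type*} {s : Finset α} (a : α → ι → ℝ)
    (h : Fintype.card ι < s.card) :
    ∃ c : s → ℝ, (∀ i, ∑ k, c k * a k i = 0) ∧ ∃ k, 0 < c k := by
  have hdep : ¬ LinearIndependent ℝ (fun k : s => a k) := fun hli => by
    have := hli.fintype_card_le_finrank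
    simp only [Fintype.card_coe, Module.finrank_fintype_fun_eq_card] at this
    omega
  obtain ⟨g, hg, k₀, hk₀⟩ := Fintype.not_linearIndependent_iff.1 hdep
  have hg' : ∀ i, ∑ k, g k * a k i = 0 := fun i => by
    simpa only [Finset.sum_apply, Pi.smul_apply, smul_eq_mul, Pi.zero_apply] using congrFun hg i
  rcases hk₀.lt_or_gt with h | h
  · exact ⟨fun k => -g k, fun i => by
      simp only [neg_mul, Finset.sum_neg_distrib, hg' i, neg_zero], k₀, neg_pos.2 h⟩
  · exact ⟨g, hg', k₀, h⟩

/- A linear dependence among the columns in `s` forbids the trace `{k ∈ s | 0 < c k}`. -/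
lemma vcDim_halfspaceTraces_le [Fintype κ] [DecidableEq κ] (S : ι → κ → ℝ) :
    (halfspaceTraces S).vcDim ≤ Fintype.card ι := by
  refine Finset.sup_le fun s hs => ?_
  rw [Finset.mem_shatterer] at hs
  by_contra! hcard
  obtain ⟨c, hc, k₁, hk₁⟩ := exists_linear_dependence_pos (fun k i => S i k) hcard
  classical
  obtain ⟨A, hA, hsA⟩ := hs (t := s.filter fun k => ∃ h : k ∈ s, 0 < c ⟨k, h⟩)
    (Finset.filter_subset _ _)
  obtain ⟨β, hβ⟩ := mem_halfspaceTraces.1 hA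
  have hiff : ∀ k : s, 0 < ∑ i, β i * S i k ↔ 0 < c k := fun k => by
    rw [← hβ]
    simpa using Finset.ext_iff.1 hsA k
  have hzero : ∑ k : s, c k * ∑ i, β i * S i k = 0 :=
    calc ∑ k : s, c k * ∑ i, β i * S i k = ∑ i, β i * ∑ k : s, c k * S i k := by
          simp_rw [Finset.mul_sum]
          rw [Finset.sum_comm]
          exact Finset.sum_congr rfl fun i _ => Finset.sum_congr rfl fun k _ => by ring
      _ = 0 := by simp only [hc, mul_zero, Finset.sum_const_zero]
  refine hzero.not_gt (Finset.sum_pos' (fun k _ => ?_)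
    ⟨k₁, Finset.mem_univ _, mul_pos hk₁ ((hiff k₁).2 hk₁)⟩)
  by_cases h : 0 < c k
  · exact (mul_pos h ((hiff k).2 h)).le
  · exact mul_nonneg_of_nonpos_of_nonpos (not_lt.1 h) (not_lt.1 (mt (hiff k).1 h))

lemma sum_Iic_choose_le_pow (N d : ℕ) : ∑ k ∈ Finset.Iic d, N.choose k ≤ (N + 1) ^ d := by
  have hIic : Finset.Iic d = Finset.range (d + 1) := by ext; simp
  rw [add_pow, hIic]
  refine Finset.sum_le_sum fun k hk => ?_
  calc N.choose k ≤ N ^ k * 1 ^ (d - k) * 1 := by simpa using Nat.choose_le_pow N k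
    _ ≤ N ^ k * 1 ^ (d - k) * d.choose k :=
      Nat.mul_le_mul_left _ (Nat.choose_pos (Finset.mem_range_succ_iff.1 hk))

lemma card_halfspaceTraces_le [Fintype κ] (S : ι → κ → ℝ) :
    (halfspaceTraces S).card ≤ (Fintype.card κ + 1) ^ Fintype.card ι := by
  classical
  calc (halfspaceTraces S).card
      ≤ ∑ k ∈ Finset.Iic (halfspaceTraces S).vcDim, (Fintype.card κ).choose k :=
        (Finset.card_le_card_shatterer _).trans Finset.card_shatterer_le_sum_vcDim
    _ ≤ ∑ k ∈ Finset.Iic (Fintype.card ι), (Fintype.card κ).choose k :=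
        Finset.sum_le_sum_of_subset (Finset.Iic_subset_Iic.2 (vcDim_halfspaceTraces_le S))
    _ ≤ _ := sum_Iic_choose_le_pow _ _

open Classical in
/-- Change the sign of the columns outside `D`. -/
noncomputable def flipColumns (D : Finset κ) (S : ι → κ → ℝ) : ι → κ → ℝ :=
  fun i k => (if k ∈ D then 1 else -1) * S i k

lemma mem_halfspaceTraces_of_flipColumns [Fintype κ] {D : Finset κ} {S : ι → κ → ℝ}
    (h : HasPositiveCombination (flipColumns D S)) : D ∈ halfspaceTraces S := by
  obtain ⟨β, hβ⟩ := h
  refine mem_halfspaceTraces.2 ⟨β, fun k => ?_⟩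
  have hk := hβ k
  by_cases hD : k ∈ D
  · simpa [flipColumns, hD] using hk
  · have : ∑ i, β i * S i k < 0 := by simpa [flipColumns, hD] using hk
    simp [hD, this.le]

lemma measurableSet_hasPositiveCombination [Finite κ] :
    MeasurableSet {S : ι → κ → ℝ | HasPositiveCombination S} := by
  refine IsOpen.measurableSet ?_
  simp only [HasPositiveCombination, Set.ofPred_exists, Set.ofPred_forall]
  exact isOpen_iUnion fun β => isOpen_iInter_of_finite fun k =>
    isOpen_lt (by fun_prop) (by fun_prop)

lemma measurePreserving_flipColumns [Fintype κ] (ν : κ → Measure ℝ)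
    [∀ k, IsProbabilityMeasure (ν k)] (hν : ∀ k, MeasurePreserving (fun x => -x) (ν k) (ν k))
    (D : Finset κ) :
    MeasurePreserving (flipColumns D) (Measure.pi fun _ : ι => Measure.pi ν)
      (Measure.pi fun _ : ι => Measure.pi ν) := by
  classical
  refine measurePreserving_pi _ _ fun _ => measurePreserving_pi (α := fun _ => ℝ)
    (f := fun k x => (if k ∈ D then 1 else -1) * x) _ _ fun k => ?_
  by_cases hk : k ∈ D
  · simp only [hk, if_true, one_mul]
    exact MeasurePreserving.id (ν k)
  · simpa only [hk, if_false, neg_one_mul] using hν k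

/- Cover's function counting argument: the `2 ^ |κ|` sign changes of the columns all preserve the
law, and few of them turn a given matrix into one with a positive combination. -/
lemma two_pow_mul_measure_hasPositiveCombination_le [Fintype κ] (ν : κ → Measure ℝ)
    [∀ k, IsProbabilityMeasure (ν k)] (hν : ∀ k, MeasurePreserving (fun x => -x) (ν k) (ν k)) :
    2 ^ Fintype.card κ *
        (Measure.pi fun _ : ι => Measure.pi ν) {S | HasPositiveCombination S} ≤
      ((Fintype.card κ + 1 : ℕ) : ENNReal) ^ Fintype.card ι := by
  classical
  set μ : Measure (ι → κ → ℝ) := Measure.pi fun _ : ι => Measure.pi ν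
  set E : Set (ι → κ → ℝ) := {S | HasPositiveCombination S}
  have hE : MeasurableSet E := measurableSet_hasPositiveCombination
  have hflip : ∀ D, MeasurePreserving (flipColumns D) μ μ := measurePreserving_flipColumns ν hν
  have hinv : ∀ D, μ (flipColumns D ⁻¹' E) = μ E := fun D =>
    (hflip D).measure_preimage hE.nullMeasurableSet
  have hcount : ∀ S, ∑ D : Finset κ, (flipColumns D ⁻¹' E).indicator (1 : (ι → κ → ℝ) → ENNReal) S ≤
      ((Fintype.card κ + 1 : ℕ) : ENNReal) ^ Fintype.card ι := fun S =>
    calc ∑ D : Finset κ, (flipColumns D ⁻¹' E).indicator (1 : (ι → κ → ℝ) → ENNReal) S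
        = ((Finset.univ.filter fun D => flipColumns D S ∈ E).card : ENNReal) := by
          simp [Set.indicator_apply]
      _ ≤ ((halfspaceTraces S).card : ENNReal) := by
          exact_mod_cast Finset.card_le_card fun D hD =>
            mem_halfspaceTraces_of_flipColumns (Finset.mem_filter.1 hD).2
      _ ≤ _ := by exact_mod_cast card_halfspaceTraces_le S
  calc 2 ^ Fintype.card κ * μ E = ∑ D : Finset κ, μ (flipColumns D ⁻¹' E) := by
        simp [hinv]
    _ = ∫⁻ S, ∑ D : Finset κ, (flipColumns D ⁻¹' E).indicator 1 S ∂μ := by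
        rw [lintegral_finsetSum _ fun D _ =>
          measurable_one.indicator ((hflip D).measurable hE)]
        exact Finset.sum_congr rfl fun D _ =>
          (lintegral_indicator_one ((hflip D).measurable hE)).symm
    _ ≤ ∫⁻ _, ((Fintype.card κ + 1 : ℕ) : ENNReal) ^ Fintype.card ι ∂μ := lintegral_mono hcount
    _ = _ := by simp

end SignPatterns

section GaussianVector

variable {ι κ m : Type*}

/-- The linear map `Σ^{1/2}` for `Σ = diag lam`, with values in the Euclidean space, so that
`⟪sqrtCov lam a, sqrtCov lam b⟫ = aᵀ Σ b`. -/
noncomputable def sqrtCov (lam : ι → ℝ) : (ι → ℝ) →ₗ[ℝ] EuclideanSpace ℝ ι where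
  toFun a := WithLp.toLp 2 fun i => √(lam i) * a i
  map_add' a b := by ext i; simp [mul_add]
  map_smul' c a := by ext i; simp [mul_left_comm]

@[simp]
lemma sqrtCov_apply (lam a : ι → ℝ) (i : ι) : sqrtCov lam a i = √(lam i) * a i := rfl

variable [Fintype ι] [Fintype m]

/-- The centred Gaussian measure on `ℝ^ι` with covariance matrix `diag lam`. -/
noncomputable abbrev gaussianVector (lam : ι → ℝ) : Measure (ι → ℝ) :=
  Measure.pi fun i => gaussianReal 0 (lam i).toNNReal

/-- The law of a matrix with i.i.d. rows, indexed by `m`, of law `N(0, diag lam)`. -/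
noncomputable abbrev gaussianRows (m : Type*) [Fintype m] (lam : ι → ℝ) : Measure (m → ι → ℝ) :=
  Measure.pi fun _ => gaussianVector lam

lemma inner_sqrtCov (lam a b : ι → ℝ) :
    ⟪sqrtCov lam a, sqrtCov lam b⟫ = ∑ i, ((lam i).toNNReal : ℝ) * (a i * b i) := by
  simp only [PiLp.inner_apply, sqrtCov_apply, RCLike.inner_apply, conj_trivial, Real.sqrt]
  refine Finset.sum_congr rfl fun i _ => ?_
  conv_rhs => rw [← NNReal.mul_self_sqrt (lam i).toNNReal]
  push_cast
  ring

lemma hasGaussianLaw_gaussianVector (lam : ι → ℝ) :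
    HasGaussianLaw (fun z : ι → ℝ => z) (gaussianVector lam) := by
  refine iIndepFun.hasGaussianLaw (X := fun i (z : ι → ℝ) => z i) (fun i => ⟨?_⟩)
    (iIndepFun_pi (X := fun _ => id) fun _ => aemeasurable_id)
  rw [(measurePreserving_eval _ i).map_eq]
  infer_instance

lemma measurable_dotProduct (a : ι → ℝ) : Measurable fun z : ι → ℝ => z ⬝ᵥ a := by
  unfold dotProduct; fun_prop

/-- The linear form `z ↦ ⟨z, a⟩` as a continuous linear map. -/
noncomputable def dotProductCLM (a : ι → ℝ) : (ι → ℝ) →L[ℝ] ℝ :=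
  LinearMap.toContinuousLinearMap
    { toFun := fun z => z ⬝ᵥ a
      map_add' := fun x y => add_dotProduct x y a
      map_smul' := fun c x => smul_dotProduct c x a }

lemma hasGaussianLaw_dotProduct (lam a : ι → ℝ) :
    HasGaussianLaw (fun z => z ⬝ᵥ a) (gaussianVector lam) :=
  (hasGaussianLaw_gaussianVector lam).map_fun (dotProductCLM a)

lemma hasGaussianLaw_pi_dotProduct [Finite κ] (lam : ι → ℝ) (a : κ → ι → ℝ) :
    HasGaussianLaw (fun z k => z ⬝ᵥ a k) (gaussianVector lam) := by
  cases nonempty_fintype κ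
  exact (hasGaussianLaw_gaussianVector lam).map_fun
    (ContinuousLinearMap.pi fun k => dotProductCLM (a k))

lemma integral_dotProduct_gaussianVector (lam a : ι → ℝ) :
    ∫ z, z ⬝ᵥ a ∂gaussianVector lam = 0 := by
  simp only [dotProduct]
  rw [integral_finsetSum _ fun i _ =>
    ((hasGaussianLaw_gaussianVector lam).eval i).integrable.mul_const (a i)]
  refine Finset.sum_eq_zero fun i _ => ?_
  have heval := integral_comp_eval (μ := fun i => gaussianReal 0 (lam i).toNNReal) (i := i)
    (f := fun x : ℝ => x) (by fun_prop)
  rw [integral_mul_const, heval, integral_id_gaussianReal, zero_mul]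

lemma covariance_eval_gaussianVector [DecidableEq ι] (lam : ι → ℝ) (i j : ι) :
    cov[fun z => z i, fun z => z j; gaussianVector lam] =
      if i = j then ((lam i).toNNReal : ℝ) else 0 := by
  have hmem : ∀ i, MemLp (fun z : ι → ℝ => z i) 2 (gaussianVector lam) := fun i =>
    ((hasGaussianLaw_gaussianVector lam).eval i).memLp_two
  split_ifs with hij
  · subst hij
    rw [covariance_self (hmem i).aemeasurable, ← variance_fun_id_gaussianReal (μ := 0)]
    exact (measurePreserving_eval (fun i => gaussianReal 0 (lam i).toNNReal) i).variance_fun_comp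
      (f := fun x : ℝ => x) (by fun_prop)
  · exact ((iIndepFun_pi (X := fun _ => id) fun _ => aemeasurable_id).indepFun
      hij).covariance_eq_zero (hmem i) (hmem j)

lemma covariance_dotProduct (lam a b : ι → ℝ) :
    cov[fun z => z ⬝ᵥ a, fun z => z ⬝ᵥ b; gaussianVector lam] =
      ⟪sqrtCov lam a, sqrtCov lam b⟫ := by
  classical
  have hmem : ∀ (c : ι → ℝ) i, MemLp (fun z : ι → ℝ => z i * c i) 2 (gaussianVector lam) :=
    fun c i => ((hasGaussianLaw_gaussianVector lam).eval i).memLp_two.mul_const (c i)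
  simp only [dotProduct]
  rw [covariance_fun_sum_fun_sum (hmem a) (hmem b), inner_sqrtCov]
  refine Finset.sum_congr rfl fun i _ => ?_
  simp only [covariance_mul_const_left, covariance_mul_const_right,
    covariance_eval_gaussianVector]
  simp [mul_assoc]

lemma measurePreserving_dotProduct (lam a : ι → ℝ) :
    MeasurePreserving (fun z => z ⬝ᵥ a) (gaussianVector lam)
      (gaussianReal 0 (‖sqrtCov lam a‖ ^ 2).toNNReal) := by
  refine ⟨measurable_dotProduct a, ?_⟩
  rw [(hasGaussianLaw_dotProduct lam a).map_eq_gaussianReal, integral_dotProduct_gaussianVector,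
    ← covariance_self (measurable_dotProduct a).aemeasurable, covariance_dotProduct,
    real_inner_self_eq_norm_sq]

lemma measurePreserving_pi_dotProduct [Fintype κ] (lam : ι → ℝ) (a : κ → ι → ℝ)
    (h : Pairwise fun k l => ⟪sqrtCov lam (a k), sqrtCov lam (a l)⟫ = 0) :
    MeasurePreserving (fun z k => z ⬝ᵥ a k) (gaussianVector lam)
      (gaussianVector fun k => ‖sqrtCov lam (a k)‖ ^ 2) := by
  have hindep : iIndepFun (fun k z => z ⬝ᵥ a k) (gaussianVector lam) :=
    (hasGaussianLaw_pi_dotProduct lam a).iIndepFun_of_covariance_eq_zero fun k l hkl =>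
      (covariance_dotProduct lam _ _).trans (h hkl)
  refine ⟨measurable_pi_lambda _ fun k => measurable_dotProduct (a k), ?_⟩
  rw [(iIndepFun_iff_map_fun_eq_pi_map fun k => (measurable_dotProduct (a k)).aemeasurable).1
    hindep]
  exact congrArg Measure.pi (funext fun k => (measurePreserving_dotProduct lam (a k)).map_eq)

lemma measurePreserving_dotProduct_prodMk [Finite κ] (lam : ι → ℝ) (a : κ → ι → ℝ) (b : ι → ℝ)
    (h : ∀ k, ⟪sqrtCov lam (a k), sqrtCov lam b⟫ = 0) :
    MeasurePreserving (fun z => (fun k => z ⬝ᵥ a k, z ⬝ᵥ b)) (gaussianVector lam)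
      (((gaussianVector lam).map fun z k => z ⬝ᵥ a k).prod
        (gaussianReal 0 (‖sqrtCov lam b‖ ^ 2).toNNReal)) := by
  cases nonempty_fintype κ
  have ha : Measurable fun (z : ι → ℝ) k => z ⬝ᵥ a k :=
    measurable_pi_lambda _ fun k => measurable_dotProduct (a k)
  have hjoint : HasGaussianLaw (fun z => (fun k => z ⬝ᵥ a k, fun _ : Unit => z ⬝ᵥ b))
      (gaussianVector lam) := by
    let L : (ι → ℝ) →L[ℝ] (κ → ℝ) × (Unit → ℝ) :=
      (ContinuousLinearMap.pi fun k => dotProductCLM (a k)).prod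
        (ContinuousLinearMap.pi fun _ => dotProductCLM b)
    exact (hasGaussianLaw_gaussianVector lam).map_fun L
  have hindep : IndepFun (fun z k => z ⬝ᵥ a k) (fun z => z ⬝ᵥ b) (gaussianVector lam) :=
    (hjoint.indepFun_of_covariance_eval fun k _ =>
      (covariance_dotProduct lam _ _).trans (h k)).comp measurable_id (measurable_pi_apply ())
  refine ⟨ha.prodMk (measurable_dotProduct b), ?_⟩
  rw [(indepFun_iff_map_prod_eq_prod_map_map ha.aemeasurable
    (measurable_dotProduct b).aemeasurable).1 hindep, (measurePreserving_dotProduct lam b).map_eq]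

lemma prod_le_of_forall_preimage_le {X Y : Type*} [MeasurableSpace X] [MeasurableSpace Y]
    (μ : Measure X) (ν : Measure Y) [IsProbabilityMeasure μ] [SFinite ν] {E : Set (X × Y)}
    (hE : MeasurableSet E) {ε : ENNReal} (h : ∀ x, ν (Prod.mk x ⁻¹' E) ≤ ε) :
    μ.prod ν E ≤ ε := by
  rw [Measure.prod_apply hE]
  exact (lintegral_mono h).trans_eq (by simp)

/- Conditioning on `W a`, which is independent of `W b`. -/
lemma gaussianRows_le_of_forall_section [Finite κ] (lam : ι → ℝ) (a : κ → ι → ℝ) (b : ι → ℝ)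
    (h : ∀ k, ⟪sqrtCov lam (a k), sqrtCov lam b⟫ = 0) {E : Set ((m → κ → ℝ) × (m → ℝ))}
    (hE : MeasurableSet E) {ε : ENNReal}
    (hε : ∀ S, gaussianVector (fun _ : m => ‖sqrtCov lam b‖ ^ 2) {y | (S, y) ∈ E} ≤ ε) :
    gaussianRows m lam {W | (fun i k => W i ⬝ᵥ a k, fun i => W i ⬝ᵥ b) ∈ E} ≤ ε := by
  have : IsProbabilityMeasure ((gaussianVector lam).map fun z k => z ⬝ᵥ a k) :=
    Measure.isProbabilityMeasure_map
      (measurable_pi_lambda _ fun k => measurable_dotProduct (a k)).aemeasurable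
  have hmp := (measurePreserving_arrowProdEquivProdArrow _ _ m _ _).comp
    (measurePreserving_pi _ _ fun _ : m => measurePreserving_dotProduct_prodMk lam a b h)
  exact (hmp.measure_preimage hE.nullMeasurableSet).trans_le
    (prod_le_of_forall_preimage_le _ _ hE hε)

end GaussianVector

section SecondMoments

lemma measure_le_ofReal_integral_div {Ω : Type*} [MeasurableSpace Ω] (μ : Measure Ω)
    [IsFiniteMeasure μ] {f : Ω → ℝ} (hf : Integrable f μ) (hf0 : ∀ x, 0 ≤ f x) {t : ℝ}
    (ht : 0 < t) : μ {x | t ≤ f x} ≤ ENNReal.ofReal ((∫ x, f x ∂μ) / t) := by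
  rw [← ENNReal.ofReal_toReal (measure_ne_top μ {x | t ≤ f x})]
  refine ENNReal.ofReal_le_ofReal ((le_div_iff₀' ht).2 ?_)
  exact mul_meas_ge_le_integral_of_nonneg (ae_of_all _ hf0) hf t

/-- The variance of the square of a standard normal variable. -/
noncomputable def varSqStdNormal : ℝ := Var[fun x => x ^ 2; gaussianReal 0 1]

lemma memLp_sq_gaussianReal (v : NNReal) : MemLp (fun x : ℝ => x ^ 2) 2 (gaussianReal 0 v) := by
  have h := (memLp_id_gaussianReal' (μ := 0) (v := v) 4 (by norm_num)).norm_rpow_div 2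
  rw [show (4 : ENNReal) = 2 * 2 by norm_num,
    ENNReal.mul_div_cancel_right (by norm_num) (by norm_num)] at h
  simpa using h

lemma integral_sq_gaussianReal (v : NNReal) : ∫ x, x ^ 2 ∂gaussianReal 0 v = v := by
  simpa [variance_eq_sub (memLp_id_gaussianReal' 2 (by norm_num))] using
    variance_id_gaussianReal (μ := 0) (v := v)

lemma variance_sq_gaussianReal (v : NNReal) :
    Var[fun x => x ^ 2; gaussianReal 0 v] = v ^ 2 * varSqStdNormal := by
  have hscale : gaussianReal 0 v = (gaussianReal 0 1).map fun x => √v * x := by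
    rw [gaussianReal_map_const_mul, mul_zero]
    congr 1
    ext
    simp
  have hsq : ((fun x : ℝ => x ^ 2) ∘ fun x => √v * x) = fun x => (v : ℝ) * x ^ 2 := by
    ext x; simp [mul_pow]
  rw [hscale, variance_map (by fun_prop) (by fun_prop), hsq, variance_const_mul, varSqStdNormal]

variable {ι : Type*} [Fintype ι]

lemma integral_sq_dotProduct (lam a : ι → ℝ) :
    ∫ z, (z ⬝ᵥ a) ^ 2 ∂gaussianVector lam = ‖sqrtCov lam a‖ ^ 2 := by
  have hmap := (measurePreserving_dotProduct lam a).map_eq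
  rw [← Real.coe_toNNReal _ (sq_nonneg ‖sqrtCov lam a‖), ← integral_sq_gaussianReal, ← hmap,
    integral_map (measurable_dotProduct a).aemeasurable (by fun_prop)]

lemma integrable_sq_dotProduct (lam a : ι → ℝ) :
    Integrable (fun z => (z ⬝ᵥ a) ^ 2) (gaussianVector lam) :=
  (hasGaussianLaw_dotProduct lam a).memLp_two.integrable_sq

lemma measure_le_abs_dotProduct_le (lam a : ι → ℝ) {t : ℝ} (ht : 0 < t) :
    gaussianVector lam {z | t ≤ |z ⬝ᵥ a|} ≤ ENNReal.ofReal (‖sqrtCov lam a‖ ^ 2 / t ^ 2) := by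
  have hmarkov := measure_le_ofReal_integral_div (gaussianVector lam)
    (integrable_sq_dotProduct lam a) (fun z => sq_nonneg _) (pow_pos ht 2)
  rw [integral_sq_dotProduct] at hmarkov
  simpa only [sq_le_sq, abs_of_pos ht] using hmarkov

lemma norm_sqrtCov_const_sq {σ : ℝ} (hσ : 0 ≤ σ) (a : ι → ℝ) :
    ‖sqrtCov (fun _ => σ) a‖ ^ 2 = σ * ‖WithLp.toLp 2 a‖ ^ 2 := by
  simp [EuclideanSpace.norm_sq_eq, mul_pow, Real.sq_sqrt hσ, Finset.mul_sum]

lemma measure_norm_sq_lt_le [Nonempty ι] {σ : ℝ} (hσ : 0 < σ) :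
    gaussianVector (fun _ : ι => σ) {y | ‖WithLp.toLp 2 y‖ ^ 2 < σ * Fintype.card ι / 2} ≤
      ENNReal.ofReal (4 * varSqStdNormal / Fintype.card ι) := by
  have : (0 : ℝ) < Fintype.card ι := by exact_mod_cast Fintype.card_pos
  have hmem : ∀ i, MemLp (fun y : ι → ℝ => y i ^ 2) 2 (gaussianVector fun _ => σ) := fun i =>
    (memLp_sq_gaussianReal _).comp_measurePreserving
      (measurePreserving_eval (fun _ => gaussianReal 0 σ.toNNReal) i)
  have hmean : ∫ y, ∑ i : ι, y i ^ 2 ∂gaussianVector (fun _ => σ) = σ * Fintype.card ι := by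
    rw [integral_finsetSum _ fun i _ => (hmem i).integrable one_le_two]
    have heval : ∀ i : ι, ∫ y, y i ^ 2 ∂gaussianVector (fun _ => σ) = σ := fun i => by
      rw [integral_comp_eval (μ := fun _ => gaussianReal 0 σ.toNNReal) (i := i)
        (f := fun x : ℝ => x ^ 2) (by fun_prop), integral_sq_gaussianReal,
        Real.coe_toNNReal _ hσ.le]
    simp [heval, mul_comm]
  have hvar : Var[∑ i, fun y : ι → ℝ => y i ^ 2; gaussianVector fun _ => σ] =
      Fintype.card ι * (σ ^ 2 * varSqStdNormal) := by
    rw [variance_sum_pi (X := fun _ x => x ^ 2) fun i => memLp_sq_gaussianReal _]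
    simp [variance_sq_gaussianReal, hσ.le]
  have hcheb := meas_ge_le_variance_div_sq (memLp_finsetSum' Finset.univ fun i _ => hmem i)
    (c := σ * Fintype.card ι / 2) (by positivity)
  simp only [Finset.sum_apply, hvar, hmean] at hcheb
  refine (measure_mono fun y hy => ?_).trans (hcheb.trans_eq ?_)
  · simp only [Set.mem_ofPred_eq, EuclideanSpace.real_norm_sq_eq] at hy ⊢
    rw [abs_sub_comm]
    exact le_abs.2 (Or.inl (by linarith))
  · congr 1
    field_simp
    ring

lemma norm_sq_starProjection_eq_sum {E : Type*} [NormedAddCommGroup E] [InnerProductSpace ℝ E]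
    [FiniteDimensional ℝ E] (U : Submodule ℝ E) (y : E) :
    ‖U.starProjection y‖ ^ 2 = ∑ k, ⟪y, (stdOrthonormalBasis ℝ U k : E)⟫ ^ 2 := by
  rw [Submodule.starProjection_apply, Submodule.norm_coe,
    ← (stdOrthonormalBasis ℝ U).sum_sq_inner_left]
  refine Finset.sum_congr rfl fun k _ => ?_
  rw [Submodule.inner_orthogonalProjectionOnto_eq_of_mem_right]

lemma measure_le_norm_sq_starProjection_le {σ : ℝ} (hσ : 0 ≤ σ)
    (U : Submodule ℝ (EuclideanSpace ℝ ι)) {t : ℝ} (ht : 0 < t) :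
    gaussianVector (fun _ : ι => σ) {y | t ≤ ‖U.starProjection (WithLp.toLp 2 y)‖ ^ 2} ≤
      ENNReal.ofReal (σ * Module.finrank ℝ U / t) := by
  have hinner : ∀ (y : ι → ℝ) (u : EuclideanSpace ℝ ι), ⟪WithLp.toLp 2 y, u⟫ = y ⬝ᵥ u.ofLp :=
    fun y u => by simp [PiLp.inner_apply, dotProduct, mul_comm]
  have hint := fun k => integrable_sq_dotProduct (fun _ : ι => σ)
    (stdOrthonormalBasis ℝ U k : EuclideanSpace ℝ ι).ofLp
  have hmarkov := measure_le_ofReal_integral_div _ (integrable_finsetSum Finset.univ fun k _ =>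
    hint k) (fun y => Finset.sum_nonneg fun k _ => sq_nonneg _) ht
  rw [integral_finsetSum _ fun k _ => hint k] at hmarkov
  simp only [norm_sq_starProjection_eq_sum, hinner]
  have hnorm : ∀ k, ‖(stdOrthonormalBasis ℝ U k : EuclideanSpace ℝ ι)‖ = 1 :=
    (stdOrthonormalBasis ℝ U).norm_eq_one
  refine hmarkov.trans_eq ?_
  simp [integral_sq_dotProduct, norm_sqrtCov_const_sq hσ, hnorm, mul_comm]

lemma measure_norm_sq_starProjection_orthogonal_lt_le [Nonempty ι] {σ : ℝ} (hσ : 0 < σ)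
    (U : Submodule ℝ (EuclideanSpace ℝ ι)) :
    gaussianVector (fun _ : ι => σ)
        {y | ‖Uᗮ.starProjection (WithLp.toLp 2 y)‖ ^ 2 < σ * Fintype.card ι / 4} ≤
      ENNReal.ofReal (4 * (varSqStdNormal + Module.finrank ℝ U) / Fintype.card ι) := by
  have : (0 : ℝ) < Fintype.card ι := by exact_mod_cast Fintype.card_pos
  have hsplit : {y : ι → ℝ |
        ‖Uᗮ.starProjection (WithLp.toLp 2 y)‖ ^ 2 < σ * Fintype.card ι / 4} ⊆
      {y | ‖WithLp.toLp 2 y‖ ^ 2 < σ * Fintype.card ι / 2} ∪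
        {y | σ * Fintype.card ι / 4 ≤ ‖U.starProjection (WithLp.toLp 2 y)‖ ^ 2} := by
    intro y hy
    have hpyth := U.norm_sq_eq_add_norm_sq_starProjection (WithLp.toLp 2 y)
    simp only [Set.mem_ofPred_eq, Set.mem_union] at hy ⊢
    by_contra! hcon
    linarith
  refine (measure_mono hsplit).trans ((measure_union_le _ _).trans ((add_le_add
    (measure_norm_sq_lt_le hσ)
    (measure_le_norm_sq_starProjection_le hσ.le U (by positivity))).trans_eq ?_))
  have hvar : 0 ≤ varSqStdNormal := variance_nonneg _ _
  rw [← ENNReal.ofReal_add (by positivity) (by positivity)]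
  congr 1
  field_simp

end SecondMoments

section MinimumNorm

variable {V E κ : Type*} [AddCommGroup V] [Module ℝ V]
  [NormedAddCommGroup E] [InnerProductSpace ℝ E]

/-- `θ` has minimum norm among the vectors whose inner products with all `v k` equal `1`. -/
def IsMinNormInterp (v : κ → E) (θ : E) : Prop :=
  (∀ k, ⟪θ, v k⟫ = 1) ∧ ∀ θ', (∀ k, ⟪θ', v k⟫ = 1) → ‖θ‖ ≤ ‖θ'‖

lemma inner_eq_zero_of_mem_span_range {v : κ → E} {x y : E} (hx : ∀ k, ⟪x, v k⟫ = 0)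
    (hy : y ∈ Submodule.span ℝ (Set.range v)) : ⟪x, y⟫ = 0 := by
  have hle : Submodule.span ℝ (Set.range v) ≤ (ℝ ∙ x)ᗮ := by
    rw [Submodule.span_le]
    rintro _ ⟨k, rfl⟩
    exact Submodule.mem_orthogonal_singleton_iff_inner_right.2 (hx k)
  exact Submodule.mem_orthogonal_singleton_iff_inner_right.1 (hle hy)

lemma IsMinNormInterp.eq_of_mem_span {v : κ → E} {θ θ₀ : E} (h : IsMinNormInterp v θ)
    (hspan : θ₀ ∈ Submodule.span ℝ (Set.range v)) (h₀ : ∀ k, ⟪θ₀, v k⟫ = 1) : θ = θ₀ := by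
  have horth : ⟪θ - θ₀, θ₀⟫ = 0 := inner_eq_zero_of_mem_span_range
    (fun k => by rw [inner_sub_left, h.1 k, h₀ k, sub_self]) hspan
  have hpyth := norm_add_sq_eq_norm_sq_add_norm_sq_of_inner_eq_zero (θ - θ₀) θ₀ horth
  rw [sub_add_cancel] at hpyth
  have hle := h.2 θ₀ h₀
  have hzero : ‖θ - θ₀‖ = 0 := by nlinarith [norm_nonneg θ, norm_nonneg (θ - θ₀)]
  exact sub_eq_zero.1 (norm_eq_zero.1 hzero)

lemma inner_eq_norm_sq_of_eq_starProjection_orthogonal [FiniteDimensional ℝ E] {v : κ → E} {m r : E}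
    (hr : r = (Submodule.span ℝ (Set.range fun k => v k - m))ᗮ.starProjection m) (k : κ) :
    ⟪r, v k⟫ = ‖r‖ ^ 2 := by
  set U := Submodule.span ℝ (Set.range fun k => v k - m)
  have hrU : r ∈ Uᗮ := hr ▸ Submodule.starProjection_apply_mem _ _
  have hrm : ⟪r, m⟫ = ‖r‖ ^ 2 := by
    rw [← real_inner_self_eq_norm_sq]
    nth_rw 3 [hr]
    rw [← Submodule.inner_starProjection_left_eq_right,
      Submodule.starProjection_eq_self_iff.2 hrU]
  have horth : ⟪r, v k - m⟫ = 0 :=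
    Submodule.inner_left_of_mem_orthogonal (Submodule.subset_span (Set.mem_range_self k)) hrU
  rw [← sub_add_cancel (v k) m, inner_add_right, horth, zero_add, hrm]

lemma IsMinNormInterp.eq_inv_norm_sq_smul [FiniteDimensional ℝ E] {v : κ → E} {θ m r : E}
    (h : IsMinNormInterp v θ) (hm : m ∈ Submodule.span ℝ (Set.range v))
    (hr : r = (Submodule.span ℝ (Set.range fun k => v k - m))ᗮ.starProjection m) (hr0 : r ≠ 0) :
    θ = (‖r‖ ^ 2)⁻¹ • r := by
  set U := Submodule.span ℝ (Set.range fun k => v k - m)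
  have hU : U ≤ Submodule.span ℝ (Set.range v) := by
    rw [Submodule.span_le]
    rintro _ ⟨k, rfl⟩
    exact sub_mem (Submodule.subset_span ⟨k, rfl⟩) hm
  refine h.eq_of_mem_span (Submodule.smul_mem _ _ ?_) fun k => ?_
  · rw [hr, Submodule.starProjection_orthogonal_val]
    exact sub_mem hm (hU (Submodule.starProjection_apply_mem _ _))
  · rw [real_inner_smul_left, inner_eq_norm_sq_of_eq_starProjection_orthogonal hr,
      inv_mul_cancel₀ (by simpa using hr0)]

lemma exists_sum_smul_residual [FiniteDimensional ℝ E] [Fintype κ] (L : V →ₗ[ℝ] E) (v : κ → V)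
    (x : V) :
    ∃ c : κ → ℝ, (∀ k, ⟪L (v k), L (x - ∑ k, c k • v k)⟫ = 0) ∧
      ‖L (x - ∑ k, c k • v k)‖ ≤ ‖L x‖ := by
  set U := Submodule.span ℝ (Set.range fun k => L (v k))
  obtain ⟨c, hc⟩ := (Submodule.mem_span_range_iff_exists_fun ℝ).1
    (U.starProjection_apply_mem (L x))
  have hres : L (x - ∑ k, c k • v k) = Uᗮ.starProjection (L x) := by
    rw [map_sub, map_sum, Submodule.starProjection_orthogonal_val, ← hc]
    simp only [map_smul]
  refine ⟨c, fun k => ?_, ?_⟩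
  · rw [hres]
    exact Submodule.inner_right_of_mem_orthogonal (Submodule.subset_span (Set.mem_range_self k))
      (Submodule.starProjection_apply_mem _ _)
  · rw [hres]
    exact Submodule.norm_starProjection_apply_le _ _

end MinimumNorm

section ColumnResidual

variable {m κ : Type*} [Fintype m]

/-- The component of the vector `y` orthogonal to all columns of the matrix `S`. -/
noncomputable def columnResidual (S : m → κ → ℝ) (y : m → ℝ) : EuclideanSpace ℝ m :=
  (Submodule.span ℝ (Set.range fun k => WithLp.toLp 2 fun i => S i k))ᗮ.starProjection
    (WithLp.toLp 2 y)

lemma inner_columnResidual (S : m → κ → ℝ) (x y : m → ℝ) :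
    ⟪columnResidual S x, WithLp.toLp 2 y⟫ =
      (‖columnResidual S (x + y)‖ ^ 2 - ‖columnResidual S (x - y)‖ ^ 2) / 4 := by
  have hinner : ⟪columnResidual S x, WithLp.toLp 2 y⟫ =
      ⟪columnResidual S x, columnResidual S y⟫ := by
    unfold columnResidual
    rw [← Submodule.inner_starProjection_left_eq_right, Submodule.starProjection_eq_self_iff.2
      (Submodule.starProjection_apply_mem _ _)]
  rw [hinner]
  simp only [columnResidual, WithLp.toLp_add, WithLp.toLp_sub, map_add, map_sub,
    norm_add_sq_real, norm_sub_sq_real]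
  ring

lemma norm_columnResidual_lt_iff [Fintype κ] (S : m → κ → ℝ) (y : m → ℝ) (r : ℝ) :
    ‖columnResidual S y‖ < r ↔ ∃ c : κ → ℝ, ‖WithLp.toLp 2 (fun i => y i - S i ⬝ᵥ c)‖ < r := by
  set U := Submodule.span ℝ (Set.range fun k => WithLp.toLp 2 fun i => S i k)
  have hcomb : ∀ c : κ → ℝ, WithLp.toLp 2 (fun i => y i - S i ⬝ᵥ c) =
      WithLp.toLp 2 y - ∑ k, c k • WithLp.toLp 2 fun i => S i k := fun c => by
    ext i; simp [dotProduct, mul_comm]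
  constructor
  · intro h
    obtain ⟨c, hc⟩ := (Submodule.mem_span_range_iff_exists_fun ℝ).1
      (U.starProjection_apply_mem (WithLp.toLp 2 y))
    refine ⟨c, ?_⟩
    rwa [hcomb, hc, ← Submodule.starProjection_orthogonal_val]
  · rintro ⟨c, hc⟩
    refine lt_of_le_of_lt ?_ hc
    have hmem : ∑ k, c k • WithLp.toLp 2 (fun i => S i k) ∈ U :=
      (Submodule.mem_span_range_iff_exists_fun ℝ).2 ⟨c, rfl⟩
    have hres : columnResidual S y = Uᗮ.starProjection (WithLp.toLp 2 fun i => y i - S i ⬝ᵥ c) := by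
      rw [hcomb, map_sub, Submodule.starProjection_orthogonal_apply_eq_zero hmem, sub_zero]
      rfl
    rw [hres]
    exact Submodule.norm_starProjection_apply_le _ _

lemma measurable_norm_columnResidual [Finite κ] :
    Measurable fun p : (m → κ → ℝ) × (m → ℝ) => ‖columnResidual p.1 p.2‖ := by
  cases nonempty_fintype κ
  refine measurable_of_Iio fun r => ?_
  have hunion : (fun p : (m → κ → ℝ) × (m → ℝ) => ‖columnResidual p.1 p.2‖) ⁻¹' Set.Iio r =
      ⋃ c : κ → ℝ, {p | ‖WithLp.toLp 2 (fun i => p.2 i - p.1 i ⬝ᵥ c)‖ < r} := by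
    ext p
    simp [norm_columnResidual_lt_iff]
  rw [hunion]
  exact (isOpen_iUnion fun c => isOpen_lt (by unfold dotProduct; fun_prop)
    continuous_const).measurableSet

lemma measurable_inner_columnResidual [Finite κ] :
    Measurable fun p : (m → κ → ℝ) × (m → ℝ) × (m → ℝ) =>
      ⟪columnResidual p.1 p.2.1, WithLp.toLp 2 p.2.2⟫ := by
  simp only [inner_columnResidual]
  have hadd : Measurable fun p : (m → κ → ℝ) × (m → ℝ) × (m → ℝ) => (p.1, p.2.1 + p.2.2) := by
    fun_prop
  have hsub : Measurable fun p : (m → κ → ℝ) × (m → ℝ) × (m → ℝ) => (p.1, p.2.1 - p.2.2) := by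
    fun_prop
  exact (((measurable_norm_columnResidual.comp hadd).pow_const 2).sub
    ((measurable_norm_columnResidual.comp hsub).pow_const 2)).div_const 4

end ColumnResidual

section TrigonometricSums

lemma sum_range_two_mul_add_one (f : ℕ → ℝ) (M : ℕ) :
    ∑ j ∈ Finset.range (2 * M + 1), f j =
      f 0 + ∑ m ∈ Finset.range M, (f (2 * m + 1) + f (2 * m + 2)) := by
  induction M with
  | zero => simp
  | succ M ih =>
    rw [show 2 * (M + 1) + 1 = 2 * M + 1 + 1 + 1 by ring, Finset.sum_range_succ,
      Finset.sum_range_succ, ih, Finset.sum_range_succ]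
    ring

lemma sum_cos_mul_two_sin (α θ : ℝ) (M : ℕ) :
    (∑ m ∈ Finset.range M, Real.cos (α + (m + 1) * θ)) * (2 * Real.sin (θ / 2)) =
      Real.sin (α + (M + 1 / 2) * θ) - Real.sin (α + θ / 2) := by
  induction M with
  | zero => simp; ring_nf
  | succ M ih =>
    have hnext : Real.sin (α + ((M + 1 : ℕ) + 1 / 2) * θ) =
        Real.sin (α + (M + 1) * θ) * Real.cos (θ / 2) +
          Real.cos (α + (M + 1) * θ) * Real.sin (θ / 2) := by
      rw [← Real.sin_add]; push_cast; ring_nf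
    have hprev : Real.sin (α + (M + 1 / 2) * θ) =
        Real.sin (α + (M + 1) * θ) * Real.cos (θ / 2) -
          Real.cos (α + (M + 1) * θ) * Real.sin (θ / 2) := by
      rw [← Real.sin_sub]; ring_nf
    rw [Finset.sum_range_succ, add_mul, ih, hnext, hprev]
    ring

lemma sin_pi_mul_div_ne_zero {N : ℕ} (hN : 0 < N) {r : ℤ} (hr : ¬ (N : ℤ) ∣ r) :
    Real.sin (Real.pi * r / N) ≠ 0 := by
  rw [Ne, Real.sin_eq_zero_iff]
  rintro ⟨k, hk⟩
  have hpi := Real.pi_ne_zero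
  field_simp at hk
  exact hr ⟨k, by rw [mul_comm]; exact_mod_cast hk.symm⟩

lemma sum_cos_eq_neg_half {M : ℕ} {r : ℤ} (hr : ¬ ((2 * M + 1 : ℕ) : ℤ) ∣ r) :
    ∑ m ∈ Finset.range M, Real.cos ((m + 1) * Real.pi * (2 * r / (2 * M + 1 : ℕ))) = -1 / 2 := by
  have hsin := sin_pi_mul_div_ne_zero (by omega) hr
  have hsum := sum_cos_mul_two_sin 0 (2 * (Real.pi * r / (2 * M + 1 : ℕ))) M
  have hend : (0 : ℝ) + (M + 1 / 2) * (2 * (Real.pi * r / (2 * M + 1 : ℕ))) = r * Real.pi := by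
    push_cast; field_simp; ring
  rw [mul_div_cancel_left₀ _ two_ne_zero, hend, Real.sin_int_mul_pi, zero_add, zero_sub] at hsum
  have hcos : ∀ m : ℕ, ((m : ℝ) + 1) * Real.pi * (2 * r / (2 * M + 1 : ℕ)) =
      0 + (m + 1) * (2 * (Real.pi * r / (2 * M + 1 : ℕ))) := fun m => by ring
  simp only [hcos]
  refine mul_right_cancel₀ hsin ?_
  linarith

/- Twice the cosine sum at angle `3π/(2K+1)` is `-1 / sin (3π/(4K+2)) - 1`. -/
lemma sum_cos_three_pi_div_le {K : ℕ} (hK : 0 < K) :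
    ∑ k ∈ Finset.range K, Real.cos ((k + 1) * (3 * Real.pi / (2 * K + 1))) ≤ -K / 5 := by
  have hK' : (1 : ℝ) ≤ K := by exact_mod_cast hK
  have hpi := Real.pi_pos
  set θ : ℝ := 3 * Real.pi / (2 * K + 1) with hθ
  have hθ0 : 0 < θ := by positivity
  have hθpi : θ ≤ Real.pi := by rw [hθ, div_le_iff₀ (by positivity)]; nlinarith
  have hθK : θ * K ≤ 5 := by
    rw [hθ, div_mul_eq_mul_div, div_le_iff₀ (by positivity)]
    nlinarith [Real.pi_lt_d2]
  have hend : (0 : ℝ) + (K + 1 / 2) * θ = Real.pi / 2 + Real.pi := by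
    rw [hθ]; field_simp; ring
  have hsum := sum_cos_mul_two_sin 0 θ K
  rw [hend, Real.sin_add_pi, Real.sin_pi_div_two] at hsum
  simp only [zero_add] at hsum
  have hsin0 : 0 < Real.sin (θ / 2) := Real.sin_pos_of_pos_of_lt_pi (by linarith) (by linarith)
  have hsin : Real.sin (θ / 2) < θ / 2 := Real.sin_lt (by linarith)
  refine le_of_mul_le_mul_right ?_ (mul_pos two_pos hsin0)
  rw [hsum]
  nlinarith

end TrigonometricSums

section Kernel

/-- The bilevel diagonal with value `l₁` on the constant feature and `l₂` on all others. -/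
noncomputable def twoLevel (B : ℕ) (l₁ l₂ : ℝ) : Fin B → ℝ := fun j => if j.val = 0 then l₁ else l₂

lemma twoLevel_pos {B : ℕ} {l₁ l₂ : ℝ} (h₁ : 0 < l₁) (h₂ : 0 < l₂) (j : Fin B) :
    0 < twoLevel B l₁ l₂ j := by
  rw [twoLevel]; split_ifs <;> assumption

lemma inner_sqrtCov_phiF (M : ℕ) {l₁ l₂ : ℝ} (h₁ : 0 ≤ l₁) (h₂ : 0 ≤ l₂) (x y : ℝ) :
    ⟪sqrtCov (twoLevel (2 * M + 1) l₁ l₂) (phiF _ x),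
        sqrtCov (twoLevel (2 * M + 1) l₁ l₂) (phiF _ y)⟫ =
      l₁ / 2 + l₂ * ∑ m ∈ Finset.range M, Real.cos ((m + 1) * Real.pi * (x - y)) := by
  let φ : ℕ → ℝ → ℝ := fun j t =>
    if j = 0 then 1 / √2
    else if j % 2 = 1 then Real.sin (((j + 1) / 2 : ℕ) * Real.pi * t)
    else Real.cos ((j / 2 : ℕ) * Real.pi * t)
  have hφ0 : φ 0 x * φ 0 y = 1 / 2 := by
    simp only [φ, if_true, div_mul_div_comm, Real.mul_self_sqrt zero_le_two, one_mul]
  have hφ : ∀ m : ℕ, φ (2 * m + 1) x * φ (2 * m + 1) y + φ (2 * m + 2) x * φ (2 * m + 2) y =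
      Real.cos ((m + 1) * Real.pi * (x - y)) := fun m => by
    have hodd : (2 * m + 1) % 2 = 1 ∧ (2 * m + 1 + 1) / 2 = m + 1 := by omega
    have heven : (2 * m + 2) % 2 ≠ 1 ∧ (2 * m + 2) / 2 = m + 1 := by omega
    simp only [φ, Nat.succ_ne_zero, hodd, heven, if_true, if_false]
    rw [mul_sub, Real.cos_sub]
    push_cast
    ring
  have hsum := Fin.sum_univ_eq_sum_range
    (fun j => (if j = 0 then l₁ else l₂) * (φ j x * φ j y)) (2 * M + 1)
  rw [sum_range_two_mul_add_one] at hsum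
  simp only [if_true, Nat.succ_ne_zero, if_false, ← mul_add, hφ0, hφ, ← Finset.mul_sum] at hsum
  have hlam : ∀ j : Fin (2 * M + 1), ((twoLevel (2 * M + 1) l₁ l₂ j).toNNReal : ℝ) =
      if (j : ℕ) = 0 then l₁ else l₂ := fun j => by
    rw [twoLevel, Real.coe_toNNReal]; split_ifs <;> assumption
  simp only [inner_sqrtCov, hlam]
  rw [div_eq_mul_one_div l₁ 2, ← hsum]
  rfl

lemma sum_cos_xtr {n : ℕ} (hn : 0 < n) (m : ℕ) (x : ℝ) :
    ∑ a, Real.cos (m * Real.pi * (xtr n a - x)) =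
      if n ∣ m then n * Real.cos (m * Real.pi * (x + 1)) else 0 := by
  have hxtr : ∀ a : Fin n, Real.cos (m * Real.pi * (xtr n a - x)) =
      Real.cos (-(m * Real.pi * (x + 1)) + ((a : ℕ) + 1) * (2 * (Real.pi * m / n))) := fun a => by
    congr 1; simp only [xtr]; field_simp; ring
  simp only [hxtr]
  split_ifs with hdvd
  · obtain ⟨k, rfl⟩ := hdvd
    have hperiod : ∀ a : ℕ, Real.cos (-((n * k : ℕ) * Real.pi * (x + 1)) +
        (a + 1) * (2 * (Real.pi * (n * k : ℕ) / n))) =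
        Real.cos ((n * k : ℕ) * Real.pi * (x + 1)) := fun a => by
      rw [← Real.cos_neg ((n * k : ℕ) * Real.pi * (x + 1)),
        ← Real.cos_add_nat_mul_two_pi (-((n * k : ℕ) * Real.pi * (x + 1))) ((a + 1) * k)]
      congr 1; push_cast; field_simp
    simp only [hperiod]
    simp
  · have hsin := sin_pi_mul_div_ne_zero (r := m) hn (by exact_mod_cast hdvd)
    have hsum := sum_cos_mul_two_sin (-(m * Real.pi * (x + 1))) (2 * (Real.pi * m / n)) n
    have hend : -(m * Real.pi * (x + 1)) + ((n : ℝ) + 1 / 2) * (2 * (Real.pi * m / n)) =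
        -(m * Real.pi * (x + 1)) + Real.pi * m / n + m * (2 * Real.pi) := by
      field_simp; ring
    rw [mul_div_cancel_left₀ _ two_ne_zero, hend, Real.sin_add_nat_mul_two_pi, sub_self] at hsum
    rw [Fin.sum_univ_eq_sum_range fun a : ℕ =>
      Real.cos (-(m * Real.pi * (x + 1)) + (a + 1) * (2 * (Real.pi * m / n)))]
    exact (mul_eq_zero.1 hsum).resolve_right (mul_ne_zero two_ne_zero (by simpa using hsin))

lemma sum_range_mul_ite_dvd {n : ℕ} (hn : 0 < n) (K : ℕ) (f : ℕ → ℝ) :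
    ∑ m ∈ Finset.range (n * K), (if n ∣ m + 1 then f (m + 1) else 0) =
      ∑ k ∈ Finset.range K, f ((k + 1) * n) := by
  induction K with
  | zero => simp
  | succ K ih =>
    have hlast : n * K + (n - 1) + 1 = (K + 1) * n := by
      rw [add_assoc, Nat.sub_add_cancel hn]; ring
    rw [mul_add, mul_one, Finset.sum_range_add, ih, Finset.sum_range_succ _ K]
    congr 1
    rw [Finset.sum_eq_single_of_mem (n - 1) (Finset.mem_range.2 (Nat.sub_lt hn one_pos))]
    · rw [hlast, if_pos (dvd_mul_left n _)]
    · intro b hb hne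
      refine if_neg fun hdvd => ?_
      rw [add_assoc, Nat.dvd_add_right (dvd_mul_right n K)] at hdvd
      have := Nat.le_of_dvd (by omega) hdvd
      have := Finset.mem_range.1 hb
      omega

/-- The average of the kernel `⟪Σ^{1/2} φ(·), Σ^{1/2} φ(x)⟫` over the training points, which keeps
only the frequencies divisible by `n`. -/
noncomputable def averagedKernel (n K : ℕ) (l₁ l₂ x : ℝ) : ℝ :=
  l₁ / 2 + l₂ * ∑ k ∈ Finset.range K, Real.cos ((k + 1) * (n * Real.pi * (x + 1)))

/-- The average of the feature vectors of the training points. -/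
noncomputable def meanFeature (n B : ℕ) : Fin B → ℝ := (n : ℝ)⁻¹ • ∑ a : Fin n, phiF B (xtr n a)

lemma sqrtCov_meanFeature (n : ℕ) {B : ℕ} (lam : Fin B → ℝ) :
    sqrtCov lam (meanFeature n B) = (n : ℝ)⁻¹ • ∑ a : Fin n, sqrtCov lam (phiF B (xtr n a)) := by
  rw [meanFeature, map_smul, map_sum]

lemma inner_sqrtCov_meanFeature_phiF {n : ℕ} (hn : 0 < n) (K : ℕ) {l₁ l₂ : ℝ} (h₁ : 0 ≤ l₁)
    (h₂ : 0 ≤ l₂) (x : ℝ) :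
    ⟪sqrtCov (twoLevel (2 * (n * K) + 1) l₁ l₂) (meanFeature n _),
        sqrtCov (twoLevel (2 * (n * K) + 1) l₁ l₂) (phiF _ x)⟫ = averagedKernel n K l₁ l₂ x := by
  have hfreq : ∀ m : ℕ, ∑ a : Fin n, Real.cos (((m : ℝ) + 1) * Real.pi * (xtr n a - x)) =
      if n ∣ m + 1 then (fun l : ℕ => n * Real.cos (l * Real.pi * (x + 1))) (m + 1) else 0 :=
    fun m => by simpa using sum_cos_xtr hn (m + 1) x
  have hterm : ∀ k : ℕ, Real.cos (((k + 1) * n : ℕ) * Real.pi * (x + 1)) =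
      Real.cos ((k + 1) * (n * Real.pi * (x + 1))) := fun k => by push_cast; ring_nf
  rw [sqrtCov_meanFeature, real_inner_smul_left, sum_inner]
  simp only [inner_sqrtCov_phiF _ h₁ h₂, Finset.sum_add_distrib, ← Finset.mul_sum]
  rw [Finset.sum_comm]
  simp only [hfreq]
  rw [sum_range_mul_ite_dvd hn K fun l : ℕ => n * Real.cos (l * Real.pi * (x + 1))]
  simp only [hterm, ← Finset.mul_sum, Finset.sum_const, Finset.card_univ, Fintype.card_fin,
    nsmul_eq_mul, averagedKernel]
  rw [mul_left_comm l₂, ← mul_add, inv_mul_cancel_left₀ (by positivity)]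

lemma averagedKernel_xtr {n : ℕ} (hn : 0 < n) (K : ℕ) (l₁ l₂ : ℝ) (a : Fin n) :
    averagedKernel n K l₁ l₂ (xtr n a) = l₁ / 2 + l₂ * K := by
  have hperiod : ∀ k : ℕ, Real.cos ((k + 1) * (n * Real.pi * (xtr n a + 1))) = 1 := fun k => by
    refine Eq.trans ?_ (Real.cos_nat_mul_two_pi ((k + 1) * (a + 1)))
    congr 1
    simp only [xtr]; push_cast; field_simp; ring
  simp [averagedKernel, hperiod]

lemma norm_sqrtCov_meanFeature_sq {n : ℕ} (hn : 0 < n) (K : ℕ) {l₁ l₂ : ℝ} (h₁ : 0 ≤ l₁)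
    (h₂ : 0 ≤ l₂) :
    ‖sqrtCov (twoLevel (2 * (n * K) + 1) l₁ l₂) (meanFeature n _)‖ ^ 2 = l₁ / 2 + l₂ * K := by
  have hn' : (n : ℝ) ≠ 0 := by positivity
  rw [← real_inner_self_eq_norm_sq]
  nth_rw 2 [sqrtCov_meanFeature]
  rw [real_inner_smul_right, inner_sum]
  simp only [inner_sqrtCov_meanFeature_phiF hn K h₁ h₂, averagedKernel_xtr hn, Finset.sum_const,
    Finset.card_univ, Fintype.card_fin, nsmul_eq_mul]
  field_simp

lemma inner_sqrtCov_phiF_sub_meanFeature {n : ℕ} (hn : 0 < n) (K : ℕ) {l₁ l₂ : ℝ} (h₁ : 0 ≤ l₁)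
    (h₂ : 0 ≤ l₂) (a : Fin n) :
    ⟪sqrtCov (twoLevel (2 * (n * K) + 1) l₁ l₂) (phiF _ (xtr n a) - meanFeature n _),
        sqrtCov (twoLevel (2 * (n * K) + 1) l₁ l₂) (meanFeature n _)⟫ = 0 := by
  rw [map_sub, inner_sub_left, real_inner_self_eq_norm_sq, norm_sqrtCov_meanFeature_sq hn K h₁ h₂,
    real_inner_comm, inner_sqrtCov_meanFeature_phiF hn K h₁ h₂, averagedKernel_xtr hn, sub_self]

lemma norm_sqrtCov_phiF_sq_le {n : ℕ} (hn : 0 < n) (K : ℕ) {l₁ l₂ : ℝ} (h₁ : 0 ≤ l₁) (h₂ : 0 ≤ l₂)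
    (x : ℝ) :
    ‖sqrtCov (twoLevel (2 * (n * K) + 1) l₁ l₂) (phiF _ x)‖ ^ 2 ≤ n * (l₁ / 2 + l₂ * K) := by
  have hn' : (1 : ℝ) ≤ n := by exact_mod_cast hn
  rw [← real_inner_self_eq_norm_sq, inner_sqrtCov_phiF _ h₁ h₂]
  simp only [sub_self, mul_zero, Real.cos_zero, Finset.sum_const, Finset.card_range, nsmul_eq_mul,
    mul_one, Nat.cast_mul]
  nlinarith

end Kernel

section MinimumNormInterpolator

variable {n B : ℕ}

lemma inner_toLp_div_sqrt_sqrtCov {lam : Fin B → ℝ} (hlam : ∀ j, 0 < lam j) (α a : Fin B → ℝ) :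
    ⟪WithLp.toLp 2 fun j => α j / √(lam j), sqrtCov lam a⟫ = ∑ j, α j * a j := by
  simp only [PiLp.inner_apply, sqrtCov_apply, RCLike.inner_apply, conj_trivial]
  refine Finset.sum_congr rfl fun j _ => ?_
  have := (Real.sqrt_pos.2 (hlam j)).ne'
  field_simp

lemma norm_toLp_div_sqrt_sq {lam : Fin B → ℝ} (hlam : ∀ j, 0 < lam j) (α : Fin B → ℝ) :
    ‖WithLp.toLp 2 fun j => α j / √(lam j)‖ ^ 2 = ∑ j, α j ^ 2 / lam j := by
  simp [EuclideanSpace.real_norm_sq_eq, div_pow, Real.sq_sqrt (hlam _).le]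

lemma IsMinInterp.isMinNormInterp {lam α : Fin B → ℝ} (hlam : ∀ j, 0 < lam j)
    (h : IsMinInterp n B lam α) :
    IsMinNormInterp (fun a => sqrtCov lam (phiF B (xtr n a)))
      (WithLp.toLp 2 fun j => α j / √(lam j)) := by
  refine ⟨fun a => (inner_toLp_div_sqrt_sqrtCov hlam _ _).trans (h.1 a), fun θ hθ => ?_⟩
  have hθα : θ = WithLp.toLp 2 fun j => √(lam j) * θ j / √(lam j) := by
    ext j; simp [mul_div_cancel_left₀ _ (Real.sqrt_pos.2 (hlam j)).ne']
  rw [hθα] at hθ ⊢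
  refine le_of_sq_le_sq ?_ (norm_nonneg _)
  rw [norm_toLp_div_sqrt_sq hlam, norm_toLp_div_sqrt_sq hlam]
  exact h.2 _ fun a => (inner_toLp_div_sqrt_sqrtCov hlam _ _).symm.trans (hθ a)

lemma sqrtCov_meanFeature_mem_span (n : ℕ) (lam : Fin B → ℝ) :
    sqrtCov lam (meanFeature n B) ∈
      Submodule.span ℝ (Set.range fun a => sqrtCov lam (phiF B (xtr n a))) := by
  rw [sqrtCov_meanFeature]
  exact Submodule.smul_mem _ _
    (Submodule.sum_mem _ fun a _ => Submodule.subset_span (Set.mem_range_self a))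

lemma IsMinInterp.sum_mul_phiF_eq {K : ℕ} (hn : 0 < n) {l₁ l₂ : ℝ} (h₁ : 0 < l₁) (h₂ : 0 < l₂)
    {α : Fin (2 * (n * K) + 1) → ℝ} (hα : IsMinInterp n _ (twoLevel _ l₁ l₂) α) (x : ℝ) :
    ∑ j, α j * phiF _ x j = averagedKernel n K l₁ l₂ x / (l₁ / 2 + l₂ * K) := by
  have hθ := (hα.isMinNormInterp (twoLevel_pos h₁ h₂)).eq_of_mem_span
    (Submodule.smul_mem _ (l₁ / 2 + l₂ * K)⁻¹ (sqrtCov_meanFeature_mem_span n _)) fun a => by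
      rw [real_inner_smul_left, inner_sqrtCov_meanFeature_phiF hn K h₁.le h₂.le,
        averagedKernel_xtr hn, inv_mul_cancel₀ (by positivity)]
  rw [← inner_toLp_div_sqrt_sqrtCov (twoLevel_pos h₁ h₂), hθ, real_inner_smul_left,
    inner_sqrtCov_meanFeature_phiF hn K h₁.le h₂.le, inv_mul_eq_div]

end MinimumNormInterpolator

section Cells

/-- The `j`-th of the `2n` intervals of length `1/n` that make up `[-1, 1]`. -/
def cell (n j : ℕ) : Set ℝ := Set.Icc (-1 + (j : ℝ) / n) (-1 + ((j : ℝ) + 1) / n)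

lemma volume_biUnion_Ico {n : ℕ} (J : Finset ℕ) :
    volume (⋃ j ∈ J, Set.Ico (-1 + (j : ℝ) / n) (-1 + ((j : ℝ) + 1) / n)) =
      ENNReal.ofReal (J.card / n) := by
  have hmono : Monotone fun j : ℕ => -1 + (j : ℝ) / n := fun i j hij => by
    dsimp only; gcongr
  have hdisj : (J : Set ℕ).PairwiseDisjoint
      fun j : ℕ => Set.Ico (-1 + (j : ℝ) / n) (-1 + ((j : ℝ) + 1) / n) := fun i _ j _ hij => by
    simpa using hmono.pairwise_disjoint_on_Ico_succ hij
  have hlength : ∀ j : ℕ, -1 + ((j : ℝ) + 1) / n - (-1 + (j : ℝ) / n) = 1 / n := fun j => by ring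
  rw [measure_biUnion_finset hdisj fun _ _ => measurableSet_Ico]
  simp only [Real.volume_Ico, hlength, Finset.sum_const, nsmul_eq_mul]
  rw [div_eq_mul_one_div (J.card : ℝ), ENNReal.ofReal_mul (by positivity), ENNReal.ofReal_natCast]

lemma cell_subset_Icc {n j : ℕ} (hj : j < 2 * n) : cell n j ⊆ Set.Icc (-1) 1 := by
  have hn : (0 : ℝ) < n := by exact_mod_cast (by omega : 0 < n)
  have hj' : (j : ℝ) + 1 ≤ 2 * n := by exact_mod_cast hj
  refine Set.Icc_subset_Icc (le_add_of_nonneg_right (by positivity)) ?_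
  have := (div_le_iff₀ hn).2 hj'
  linarith

lemma abs_sub_le_of_mem_cell {n j : ℕ} {x y : ℝ} (hx : x ∈ cell n j) (hy : y ∈ cell n j) :
    |y - x| ≤ 1 / n := by
  have hlength : ((j : ℝ) + 1) / n = j / n + 1 / n := add_div _ _ _
  rw [cell, Set.mem_Icc] at hx hy
  rw [abs_le]
  constructor <;> linarith

lemma volume_advRisk_set_ne_top (f : ℝ → ℝ) (ε : ℝ) :
    volume {x ∈ Set.Icc (-1 : ℝ) 1 | ∃ y : ℝ, |y - x| ≤ ε ∧ f y ≤ 0} ≠ ⊤ :=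
  ne_top_of_le_ne_top (by simp) (measure_mono (t := Set.Icc (-1 : ℝ) 1) fun _ hx => hx.1)

lemma advRisk_le_one (f : ℝ → ℝ) (ε : ℝ) : advRisk f ε ≤ 1 := by
  have hle : (volume {x ∈ Set.Icc (-1 : ℝ) 1 | ∃ y : ℝ, |y - x| ≤ ε ∧ f y ≤ 0}).toReal ≤
      (volume (Set.Icc (-1 : ℝ) 1)).toReal :=
    ENNReal.toReal_mono (by simp) (measure_mono fun _ hx => hx.1)
  have hvol : (volume (Set.Icc (-1 : ℝ) 1)).toReal = 2 := by simp; norm_num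
  rw [advRisk]
  linarith

lemma card_div_le_advRisk {n : ℕ} {f : ℝ → ℝ} {J : Finset ℕ} (hJ : ∀ j ∈ J, j < 2 * n)
    (h : ∀ j ∈ J, ∃ y ∈ cell n j, f y ≤ 0) : (J.card : ℝ) / n / 2 ≤ advRisk f (1 / n) := by
  have hsub : (⋃ j ∈ J, Set.Ico (-1 + (j : ℝ) / n) (-1 + ((j : ℝ) + 1) / n)) ⊆
      {x ∈ Set.Icc (-1 : ℝ) 1 | ∃ y : ℝ, |y - x| ≤ 1 / (n : ℝ) ∧ f y ≤ 0} := by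
    refine Set.iUnion₂_subset fun j hj x hx => ?_
    have hx : x ∈ cell n j := Set.Ico_subset_Icc_self hx
    obtain ⟨y, hy, hfy⟩ := h j hj
    exact ⟨cell_subset_Icc (hJ j hj) hx, y, abs_sub_le_of_mem_cell hx hy, hfy⟩
  have hle := ENNReal.toReal_mono (volume_advRisk_set_ne_top f _) (measure_mono hsub)
  rw [volume_biUnion_Ico, ENNReal.toReal_ofReal (by positivity)] at hle
  exact div_le_div_of_nonneg_right hle zero_le_two

open Classical in
lemma lt_card_filter_of_lt_abs_advRisk_sub {n : ℕ} (hn : 0 < n) {f g : ℝ → ℝ} {δ : ℝ}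
    (hf : ∀ j < 2 * n, ∃ y ∈ cell n j, f y ≤ 0)
    (h : δ < |advRisk g (1 / n) - advRisk f (1 / n)|) :
    δ * (2 * n) < (Finset.univ.filter fun j : Fin (2 * n) => ∀ y ∈ cell n j, 0 < g y).card := by
  have hn' : (0 : ℝ) < n := by exact_mod_cast hn
  have hf1 : advRisk f (1 / n) = 1 := by
    refine le_antisymm (advRisk_le_one f _) ?_
    have hge := card_div_le_advRisk (n := n) (J := Finset.range (2 * n)) (by simp)
      (by simpa using hf)
    rw [Finset.card_range] at hge
    push_cast at hge
    field_simp at hge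
    linarith
  set G := Finset.univ.filter fun j : Fin (2 * n) => ∀ y ∈ cell n j, 0 < g y with hG
  have hGcompl : ∀ j ∈ Gᶜ.map Fin.valEmbedding, ∃ y ∈ cell n j, g y ≤ 0 := by
    rintro _ hj
    obtain ⟨j, hjG, rfl⟩ := Finset.mem_map.1 hj
    have hjG' : ¬ ∀ y ∈ cell n j, 0 < g y := by simpa only [hG, Finset.mem_compl,
      Finset.mem_filter, Finset.mem_univ, true_and] using hjG
    push Not at hjG'
    exact hjG'
  have hg := card_div_le_advRisk (J := Gᶜ.map Fin.valEmbedding) (by simp) hGcompl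
  rw [Finset.card_map, Finset.card_compl, Fintype.card_fin,
    Nat.cast_sub (by simpa using Finset.card_le_univ G), div_div,
    div_le_iff₀ (by positivity)] at hg
  rw [hf1, abs_of_nonpos (by linarith [advRisk_le_one g (1 / n)])] at h
  push_cast at hg
  nlinarith

/-- A point of the `j`-th cell where the averaged kernel is very negative: it lies at distance
`3 / (n (2K + 1))` from the endpoint of the cell of the form `-1 + 2a/n`. -/
noncomputable def dipPoint (n K j : ℕ) : ℝ :=
  if j % 2 = 0 then -1 + j / n + 3 / (n * (2 * K + 1))
  else -1 + (j + 1) / n - 3 / (n * (2 * K + 1))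

variable {n K : ℕ}

lemma dipPoint_mem_cell (hn : 0 < n) (hK : 0 < K) (j : ℕ) : dipPoint n K j ∈ cell n j := by
  have hn' : (0 : ℝ) < n := by exact_mod_cast hn
  have hK' : (1 : ℝ) ≤ K := by exact_mod_cast hK
  have hle : (3 : ℝ) / (n * (2 * K + 1)) ≤ 1 / n := by
    rw [div_le_div_iff₀ (by positivity) hn']
    nlinarith
  have hnonneg : (0 : ℝ) ≤ 3 / (n * (2 * K + 1)) := by positivity
  rw [dipPoint, cell, add_div]
  split_ifs <;> constructor <;> linarith

lemma averagedKernel_dipPoint_le (hn : 0 < n) (hK : 0 < K) (j : ℕ) (l₁ : ℝ) {l₂ : ℝ}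
    (h₂ : 0 ≤ l₂) : averagedKernel n K l₁ l₂ (dipPoint n K j) ≤ l₁ / 2 - l₂ * K / 5 := by
  have hn' : (n : ℝ) ≠ 0 := by positivity
  have hcos : ∀ k : ℕ, Real.cos ((k + 1) * (n * Real.pi * (dipPoint n K j + 1))) =
      Real.cos ((k + 1) * (3 * Real.pi / (2 * K + 1))) := fun k => by
    rw [dipPoint]
    split_ifs with hj
    · obtain ⟨a, rfl⟩ : 2 ∣ j := Nat.dvd_of_mod_eq_zero hj
      rw [← Real.cos_add_nat_mul_two_pi ((k + 1) * (3 * Real.pi / (2 * K + 1))) ((k + 1) * a)]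
      congr 1; push_cast; field_simp; ring
    · obtain ⟨a, ha⟩ : 2 ∣ j + 1 := by omega
      have ha' : (j : ℝ) + 1 = 2 * a := by exact_mod_cast ha
      rw [← Real.cos_nat_mul_two_pi_sub ((k + 1) * (3 * Real.pi / (2 * K + 1))) ((k + 1) * a), ha']
      congr 1; push_cast; field_simp; ring
  have hsum := mul_le_mul_of_nonneg_left (sum_cos_three_pi_div_le hK) h₂
  simp only [averagedKernel, hcos]
  linarith

lemma averagedKernel_dipPoint_div_le (hn : 0 < n) (hK : 0 < K) {l₁ l₂ : ℝ} (h₁ : 0 < l₁)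
    (h₂ : 0 < l₂) (hsmall : l₁ / 2 ≤ l₂ * K / 20) (j : ℕ) :
    averagedKernel n K l₁ l₂ (dipPoint n K j) / (l₁ / 2 + l₂ * K) ≤ -1 / 10 := by
  rw [div_le_iff₀ (by positivity)]
  linarith [averagedKernel_dipPoint_le hn hK j l₁ h₂.le]

end Cells

section FineGrid

lemma twoLevel_self (B : ℕ) (l : ℝ) : twoLevel B l l = fun _ => l := by
  ext j; simp [twoLevel]

lemma pairwise_inner_sqrtCov_phiF_xtr (M : ℕ) {l : ℝ} (hl : 0 ≤ l) :
    Pairwise fun s t : Fin (2 * M + 1) =>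
      ⟪sqrtCov (fun _ => l) (phiF (2 * M + 1) (xtr (2 * M + 1) s)),
        sqrtCov (fun _ => l) (phiF (2 * M + 1) (xtr (2 * M + 1) t))⟫ = 0 := by
  intro s t hst
  have hndvd : ¬ ((2 * M + 1 : ℕ) : ℤ) ∣ (s : ℤ) - t := fun hdvd => by
    have hzero := Int.eq_zero_of_abs_lt_dvd hdvd (by rw [abs_lt]; omega)
    exact hst (Fin.ext (by omega))
  have hsub : xtr (2 * M + 1) s - xtr (2 * M + 1) t =
      2 * ((s : ℤ) - (t : ℤ) : ℤ) / (2 * M + 1 : ℕ) := by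
    simp only [xtr]; push_cast; ring
  rw [← twoLevel_self, inner_sqrtCov_phiF M hl hl, hsub, sum_cos_eq_neg_half hndvd]
  ring

/-- The embedding of pairs (cell, position) into the indices of the regular grid of `2nK + 1`
points, which puts `K` grid points in each of the `2n` cells. -/
def gridIndex (n K : ℕ) (k : Fin (2 * n) × Fin K) : Fin (2 * (n * K) + 1) :=
  Fin.castLE (by rw [mul_assoc]; exact Nat.le_succ _) (finProdFinEquiv k)

lemma gridIndex_injective (n K : ℕ) : Function.Injective (gridIndex n K) :=
  (Fin.castLE_injective _).comp finProdFinEquiv.injective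

lemma xtr_gridIndex_mem_cell {n K : ℕ} (k : Fin (2 * n) × Fin K) :
    xtr (2 * (n * K) + 1) (gridIndex n K k) ∈ cell n k.1 := by
  obtain ⟨j, s⟩ := k
  have hn : (0 : ℝ) < n := by exact_mod_cast (by have := j.2; omega : 0 < n)
  have hj : (j : ℝ) ≤ 2 * n := by exact_mod_cast j.2.le
  have hs : (s : ℝ) + 1 ≤ K := by exact_mod_cast s.2
  have hs0 : (0 : ℝ) ≤ (s : ℕ) := by positivity
  simp only [xtr, gridIndex, cell, Set.mem_Icc, add_le_add_iff_left, Fin.val_castLE,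
    finProdFinEquiv_apply_val]
  push_cast
  constructor
  · rw [div_le_div_iff₀ hn (by positivity)]
    nlinarith [mul_nonneg hn.le hs0]
  · rw [div_le_div_iff₀ (by positivity) hn]
    nlinarith [mul_le_mul_of_nonneg_left hs hn.le]

end FineGrid

section ResidualOfGaussianRows

variable {ι κ m : Type*} [Fintype ι] [Fintype m]

lemma gaussianRows_norm_columnResidual_sq_lt_le [Fintype κ] [Nonempty m] (lam : ι → ℝ)
    (a : κ → ι → ℝ) {b : ι → ℝ} (h : ∀ k, ⟪sqrtCov lam (a k), sqrtCov lam b⟫ = 0)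
    (hb : 0 < ‖sqrtCov lam b‖ ^ 2) :
    gaussianRows m lam {W | ‖columnResidual (fun i k => W i ⬝ᵥ a k) fun i => W i ⬝ᵥ b‖ ^ 2 <
        ‖sqrtCov lam b‖ ^ 2 * Fintype.card m / 4} ≤
      ENNReal.ofReal (4 * (varSqStdNormal + Fintype.card κ) / Fintype.card m) := by
  have hE : MeasurableSet {p : (m → κ → ℝ) × (m → ℝ) | ‖columnResidual p.1 p.2‖ ^ 2 <
      ‖sqrtCov lam b‖ ^ 2 * Fintype.card m / 4} :=
    measurableSet_lt (measurable_norm_columnResidual.pow_const 2) measurable_const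
  refine gaussianRows_le_of_forall_section lam a b h hE fun S => ?_
  have hresidual := measure_norm_sq_starProjection_orthogonal_lt_le hb
    (Submodule.span ℝ (Set.range fun k => WithLp.toLp 2 fun i => S i k))
  refine hresidual.trans (ENNReal.ofReal_le_ofReal ?_)
  gcongr
  exact finrank_range_le_card _

/- Given the columns `W a` and `W b`, the inner product of the residual `r` with `W w` is a centred
Gaussian of variance `‖r‖² ‖sqrtCov lam w‖²`. -/
lemma gaussianRows_le_abs_inner_columnResidual_le [Finite κ] (lam : ι → ℝ) (a : κ → ι → ℝ)
    {b w : ι → ℝ}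
    (ha : ∀ k, ⟪sqrtCov lam (a k), sqrtCov lam w⟫ = 0) (hb : ⟪sqrtCov lam b, sqrtCov lam w⟫ = 0)
    {s ε : ℝ} (hs : 0 < s) (hε : 0 < ε) :
    gaussianRows m lam {W |
        s ≤ ‖columnResidual (fun i k => W i ⬝ᵥ a k) fun i => W i ⬝ᵥ b‖ ^ 2 ∧
        ε * ‖columnResidual (fun i k => W i ⬝ᵥ a k) fun i => W i ⬝ᵥ b‖ ^ 2 ≤
          |⟪columnResidual (fun i k => W i ⬝ᵥ a k) fun i => W i ⬝ᵥ b,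
            WithLp.toLp 2 fun i => W i ⬝ᵥ w⟫|} ≤
      ENNReal.ofReal (‖sqrtCov lam w‖ ^ 2 / (ε ^ 2 * s)) := by
  let r (S : m → Option κ → ℝ) := columnResidual (fun i k => S i (some k)) fun i => S i none
  have hsplit : Measurable fun p : (m → Option κ → ℝ) × (m → ℝ) =>
      ((fun i k => p.1 i (some k) : m → κ → ℝ), (fun i => p.1 i none : m → ℝ), p.2) := by
    fun_prop
  have hnorm : Measurable fun p : (m → Option κ → ℝ) × (m → ℝ) => ‖r p.1‖ ^ 2 :=
    (measurable_norm_columnResidual.comp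
      (hsplit.fst.prodMk hsplit.snd.fst)).pow_const 2
  have hinner : Measurable fun p : (m → Option κ → ℝ) × (m → ℝ) =>
      |⟪r p.1, WithLp.toLp 2 p.2⟫| := (measurable_inner_columnResidual.comp hsplit).abs
  have hE : MeasurableSet {p : (m → Option κ → ℝ) × (m → ℝ) |
      s ≤ ‖r p.1‖ ^ 2 ∧ ε * ‖r p.1‖ ^ 2 ≤ |⟪r p.1, WithLp.toLp 2 p.2⟫|} :=
    (measurableSet_le measurable_const hnorm).inter (measurableSet_le (hnorm.const_mul ε) hinner)
  have horth : ∀ k : Option κ, ⟪sqrtCov lam (k.elim b a), sqrtCov lam w⟫ = 0 := by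
    rintro (_ | k)
    exacts [hb, ha k]
  refine gaussianRows_le_of_forall_section lam (fun k : Option κ => k.elim b a) w horth hE
    fun S => ?_
  by_cases hS : s ≤ ‖r S‖ ^ 2
  · have hpos : 0 < ‖r S‖ ^ 2 := hs.trans_le hS
    refine (measure_mono fun y hy => ?_).trans ((measure_le_abs_dotProduct_le _ (r S).ofLp
      (mul_pos hε hpos)).trans (ENNReal.ofReal_le_ofReal ?_))
    · have hy := hy.2
      simpa [EuclideanSpace.inner_eq_star_dotProduct] using hy
    · rw [norm_sqrtCov_const_sq (sq_nonneg _)]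
      simp only [WithLp.toLp_ofLp]
      calc _ = ‖sqrtCov lam w‖ ^ 2 / (ε ^ 2 * ‖r S‖ ^ 2) := by field_simp
        _ ≤ _ := by gcongr
  · simp [hS]

end ResidualOfGaussianRows

section ManyFeatures

variable {n B d : ℕ}

/-- The linear map `c ↦ W c` with values in the Euclidean space; the vector of RFS features of `x`
is `randomFeatures W (phiF B x)`. -/
noncomputable def randomFeatures (W : Fin d → Fin B → ℝ) :
    (Fin B → ℝ) →ₗ[ℝ] EuclideanSpace ℝ (Fin d) where
  toFun c := WithLp.toLp 2 fun i => W i ⬝ᵥ c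
  map_add' a b := by ext i; simp
  map_smul' c a := by ext i; simp

lemma rfsFun_eq_inner (W : Fin d → Fin B → ℝ) (β : Fin d → ℝ) (x : ℝ) :
    rfsFun B d W β x = ⟪WithLp.toLp 2 β, randomFeatures W (phiF B x)⟫ := by
  simp [rfsFun, randomFeatures, PiLp.inner_apply, dotProduct, mul_comm]

/-- The component of the averaged RFS feature vector orthogonal to the differences between the RFS
feature vectors of the training points and their average. -/
noncomputable def meanResidual (n : ℕ) (W : Fin d → Fin B → ℝ) : EuclideanSpace ℝ (Fin d) :=
  columnResidual (fun i a => W i ⬝ᵥ (phiF B (xtr n a) - meanFeature n B))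
    fun i => W i ⬝ᵥ meanFeature n B

lemma meanResidual_eq_starProjection (n : ℕ) (W : Fin d → Fin B → ℝ) :
    meanResidual n W = (Submodule.span ℝ (Set.range fun a : Fin n =>
      randomFeatures W (phiF B (xtr n a)) - randomFeatures W (meanFeature n B)))ᗮ.starProjection
        (randomFeatures W (meanFeature n B)) := by
  simp only [← map_sub]
  rfl

/-- `β` is a minimum-norm interpolator on the RFS features whenever an interpolator exists. -/
def IsMinRFSInterp (n B d : ℕ) (W : Fin d → Fin B → ℝ) (β : Fin d → ℝ) : Prop :=
  (∃ β', RFSInterpolates n B d W β') → RFSInterpolates n B d W β ∧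
    ∀ β', RFSInterpolates n B d W β' → ∑ i, β i ^ 2 ≤ ∑ i, β' i ^ 2

lemma IsMinRFSInterp.toLp_eq {W : Fin d → Fin B → ℝ} {β : Fin d → ℝ}
    (h : IsMinRFSInterp n B d W β) (hr : meanResidual n W ≠ 0) :
    WithLp.toLp 2 β = (‖meanResidual n W‖ ^ 2)⁻¹ • meanResidual n W := by
  have hres := meanResidual_eq_starProjection n W
  obtain ⟨hβ, hmin⟩ := h ⟨((‖meanResidual n W‖ ^ 2)⁻¹ • meanResidual n W).ofLp, fun a => by
    rw [rfsFun_eq_inner, WithLp.toLp_ofLp, real_inner_smul_left,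
      inner_eq_norm_sq_of_eq_starProjection_orthogonal hres, inv_mul_cancel₀ (by simpa using hr)]⟩
  have hminNorm : IsMinNormInterp (fun a : Fin n => randomFeatures W (phiF B (xtr n a)))
      (WithLp.toLp 2 β) := by
    refine ⟨fun a => (rfsFun_eq_inner W β _).symm.trans (hβ a), fun θ hθ => ?_⟩
    refine le_of_sq_le_sq ?_ (norm_nonneg _)
    rw [EuclideanSpace.real_norm_sq_eq, EuclideanSpace.real_norm_sq_eq]
    exact hmin θ.ofLp fun a => (rfsFun_eq_inner W _ _).trans (hθ a)
  refine hminNorm.eq_inv_norm_sq_smul ?_ hres hr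
  rw [meanFeature, map_smul, map_sum]
  exact Submodule.smul_mem _ _
    (Submodule.sum_mem _ fun a _ => Submodule.subset_span (Set.mem_range_self a))

lemma IsMinRFSInterp.rfsFun_eq {W : Fin d → Fin B → ℝ} {β : Fin d → ℝ}
    (h : IsMinRFSInterp n B d W β) (hr : meanResidual n W ≠ 0) (c : Fin n → ℝ) (x : ℝ) :
    rfsFun B d W β x = ∑ a, c a + ⟪meanResidual n W, randomFeatures W
      (phiF B x - ∑ a, c a • phiF B (xtr n a))⟫ / ‖meanResidual n W‖ ^ 2 := by
  have : ‖meanResidual n W‖ ^ 2 ≠ 0 := by simpa using hr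
  have hinner := inner_eq_norm_sq_of_eq_starProjection_orthogonal
    (meanResidual_eq_starProjection n W)
  rw [rfsFun_eq_inner, h.toLp_eq hr, real_inner_smul_left, map_sub, inner_sub_right, map_sum,
    inner_sum]
  simp only [map_smul, real_inner_smul_right, hinner, ← Finset.sum_mul]
  field_simp
  ring

lemma IsMinRFSInterp.rfsFun_neg {W : Fin d → Fin B → ℝ} {β : Fin d → ℝ}
    (h : IsMinRFSInterp n B d W β) (hr : 0 < ‖meanResidual n W‖ ^ 2) {c : Fin n → ℝ} {ε x : ℝ}
    (hc : ∑ a, c a ≤ -ε) (hlt : |⟪meanResidual n W, randomFeatures W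
      (phiF B x - ∑ a, c a • phiF B (xtr n a))⟫| < ε * ‖meanResidual n W‖ ^ 2) :
    rfsFun B d W β x < 0 := by
  rw [h.rfsFun_eq (by simpa using hr.ne') c]
  linarith [(div_lt_iff₀ hr).2 ((le_abs_self _).trans_lt hlt)]

lemma inner_sqrtCov_meanFeature_eq_zero {lam : Fin B → ℝ} {y : EuclideanSpace ℝ (Fin B)}
    (hy : ∀ a : Fin n, ⟪sqrtCov lam (phiF B (xtr n a)), y⟫ = 0) :
    ⟪sqrtCov lam (meanFeature n B), y⟫ = 0 := by
  rw [real_inner_comm]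
  exact inner_eq_zero_of_mem_span_range (fun a => (real_inner_comm _ _).trans (hy a))
    (sqrtCov_meanFeature_mem_span n lam)

variable {K : ℕ} {l₁ l₂ : ℝ}

lemma sum_eq_averagedKernel_div (hn : 0 < n) (h₁ : 0 < l₁) (h₂ : 0 < l₂) {c : Fin n → ℝ} {x : ℝ}
    (hc : ∀ a, ⟪sqrtCov (twoLevel (2 * (n * K) + 1) l₁ l₂) (phiF _ (xtr n a)),
      sqrtCov (twoLevel (2 * (n * K) + 1) l₁ l₂)
        (phiF _ x - ∑ a, c a • phiF _ (xtr n a))⟫ = 0) :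
    ∑ a, c a = averagedKernel n K l₁ l₂ x / (l₁ / 2 + l₂ * K) := by
  have hmean := inner_sqrtCov_meanFeature_eq_zero hc
  rw [map_sub, inner_sub_right, map_sum, inner_sum] at hmean
  simp only [map_smul, real_inner_smul_right, inner_sqrtCov_meanFeature_phiF hn K h₁.le h₂.le,
    averagedKernel_xtr hn, ← Finset.sum_mul] at hmean
  rw [eq_div_iff (by positivity)]
  linarith

lemma gaussianRows_pos_rfsFun_le (hn : 0 < n) (hd : 0 < d) (h₁ : 0 < l₁) (h₂ : 0 < l₂)
    {β : (Fin d → Fin (2 * (n * K) + 1) → ℝ) → Fin d → ℝ}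
    (hβ : ∀ W, IsMinRFSInterp n _ d W (β W)) {x : ℝ}
    (hx : averagedKernel n K l₁ l₂ x / (l₁ / 2 + l₂ * K) ≤ -1 / 10) :
    gaussianRows (Fin d) (twoLevel (2 * (n * K) + 1) l₁ l₂) {W | 0 < rfsFun _ d W (β W) x} ≤
      ENNReal.ofReal (4 * (varSqStdNormal + n) / d) + ENNReal.ofReal (400 * n / d) := by
  set lam := twoLevel (2 * (n * K) + 1) l₁ l₂
  set κ := l₁ / 2 + l₂ * K
  have hκ : 0 < κ := by positivity
  have hd' : (0 : ℝ) < d := by exact_mod_cast hd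
  obtain ⟨c, hc, hwx⟩ := exists_sum_smul_residual (sqrtCov lam)
    (fun a : Fin n => phiF (2 * (n * K) + 1) (xtr n a)) (phiF _ x)
  have hsum := sum_eq_averagedKernel_div hn h₁ h₂ hc
  set w := phiF (2 * (n * K) + 1) x - ∑ a, c a • phiF _ (xtr n a)
  have hmean := inner_sqrtCov_meanFeature_eq_zero hc
  have hw : ‖sqrtCov lam w‖ ^ 2 ≤ n * κ :=
    (pow_le_pow_left₀ (norm_nonneg _) hwx 2).trans (norm_sqrtCov_phiF_sq_le hn K h₁.le h₂.le x)
  have hsub : {W | 0 < rfsFun _ d W (β W) x} ⊆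
      {W | ‖meanResidual n W‖ ^ 2 < κ * d / 4} ∪ {W | κ * d / 4 ≤ ‖meanResidual n W‖ ^ 2 ∧
        1 / 10 * ‖meanResidual n W‖ ^ 2 ≤ |⟪meanResidual n W, randomFeatures W w⟫|} := by
    intro W hW
    by_contra! hbad
    simp only [Set.mem_union, Set.mem_ofPred_eq, not_or, not_and, not_lt, not_le] at hbad
    exact hW.not_gt ((hβ W).rfsFun_neg (lt_of_lt_of_le (by positivity) hbad.1)
      (by rw [← neg_div, hsum]; exact hx) (hbad.2 hbad.1))
  have : Nonempty (Fin d) := ⟨⟨0, hd⟩⟩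
  have hA := gaussianRows_norm_columnResidual_sq_lt_le (m := Fin d) lam _
    (inner_sqrtCov_phiF_sub_meanFeature hn K h₁.le h₂.le)
    (by rw [norm_sqrtCov_meanFeature_sq hn K h₁.le h₂.le]; exact hκ)
  rw [norm_sqrtCov_meanFeature_sq hn K h₁.le h₂.le, Fintype.card_fin, Fintype.card_fin] at hA
  have hB := gaussianRows_le_abs_inner_columnResidual_le (m := Fin d) (s := κ * d / 4)
    (ε := 1 / 10) lam (fun a : Fin n => phiF _ (xtr n a) - meanFeature n _) (b := meanFeature n _)
    (w := w) (fun a => by rw [map_sub, inner_sub_left, hc, hmean, sub_zero]) hmean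
    (by positivity) (by norm_num)
  refine (measure_mono hsub).trans ((measure_union_le _ _).trans (add_le_add hA (hB.trans
    (ENNReal.ofReal_le_ofReal ?_))))
  rw [div_le_div_iff₀ (by positivity) hd']
  nlinarith

open Classical in
lemma measure_lt_card_filter_mem_le {Ω J : Type*} [MeasurableSpace Ω] [Fintype J] [Nonempty J]
    (μ : Measure Ω) {E : J → Set Ω} {ε : ENNReal} (hE : ∀ j, μ (E j) ≤ ε) {δ : ℝ} (hδ : 0 < δ) :
    μ {ω | δ * Fintype.card J < (Finset.univ.filter fun j => ω ∈ E j).card} ≤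
      ε / ENNReal.ofReal δ := by
  let count (ω : Ω) : ENNReal := ∑ j, (toMeasurable μ (E j)).indicator 1 ω
  have hmeas : ∀ j, Measurable ((toMeasurable μ (E j)).indicator (1 : Ω → ENNReal)) := fun j =>
    measurable_one.indicator (measurableSet_toMeasurable _ _)
  have hexp : ∫⁻ ω, count ω ∂μ ≤ Fintype.card J * ε := by
    rw [lintegral_finsetSum _ fun j _ => hmeas j, ← nsmul_eq_mul, ← Finset.card_univ]
    refine Finset.sum_le_card_nsmul _ _ _ fun j _ => ?_
    rw [lintegral_indicator_one (measurableSet_toMeasurable _ _), measure_toMeasurable]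
    exact hE j
  have hcount : ∀ ω, ((Finset.univ.filter fun j => ω ∈ E j).card : ENNReal) ≤ count ω :=
    fun ω => by
      rw [Finset.card_filter, Nat.cast_sum]
      refine Finset.sum_le_sum fun j _ => ?_
      split_ifs with hj
      · simp [subset_toMeasurable μ _ hj]
      · simp
  have hcard' : ENNReal.ofReal (δ * Fintype.card J) = ENNReal.ofReal δ * Fintype.card J := by
    rw [ENNReal.ofReal_mul hδ.le, ENNReal.ofReal_natCast]
  calc μ {ω | δ * Fintype.card J < (Finset.univ.filter fun j => ω ∈ E j).card}
      ≤ μ {ω | ENNReal.ofReal (δ * Fintype.card J) ≤ count ω} := measure_mono fun ω hω =>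
        ((ENNReal.ofReal_le_ofReal (le_of_lt hω)).trans_eq
          (ENNReal.ofReal_natCast _)).trans (hcount ω)
    _ ≤ (∫⁻ ω, count ω ∂μ) / ENNReal.ofReal (δ * Fintype.card J) :=
        meas_ge_le_lintegral_div (Finset.measurable_fun_sum _ fun j _ => hmeas j).aemeasurable
          (by simp [hδ, Fintype.card_pos]) ENNReal.ofReal_ne_top
    _ ≤ Fintype.card J * ε / (ENNReal.ofReal δ * Fintype.card J) := by
        rw [hcard']; gcongr
    _ = ε / ENNReal.ofReal δ := by
        rw [mul_comm (ENNReal.ofReal δ), ENNReal.mul_div_mul_left _ _ (by simp)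
          (ENNReal.natCast_ne_top _)]

lemma IsMinInterp.exists_mem_cell_nonpos (hn : 0 < n) (hK : 0 < K) (h₁ : 0 < l₁) (h₂ : 0 < l₂)
    (hsmall : l₁ / 2 ≤ l₂ * K / 20) {α : Fin (2 * (n * K) + 1) → ℝ}
    (hα : IsMinInterp n _ (twoLevel _ l₁ l₂) α) (j : ℕ) :
    ∃ y ∈ cell n j, ∑ i, α i * phiF _ y i ≤ 0 := by
  refine ⟨dipPoint n K j, dipPoint_mem_cell hn hK j, ?_⟩
  rw [hα.sum_mul_phiF_eq hn h₁ h₂]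
  linarith [averagedKernel_dipPoint_div_le hn hK h₁ h₂ hsmall j]

/- Markov's inequality for the number of cells on which `ĝ` is positive. -/
lemma gaussianRows_lt_abs_advRisk_sub_le_of_isMinRFSInterp (hn : 0 < n) (hK : 0 < K) (hd : 0 < d)
    (h₁ : 0 < l₁) (h₂ : 0 < l₂) (hsmall : l₁ / 2 ≤ l₂ * K / 20)
    {α : Fin (2 * (n * K) + 1) → ℝ} (hα : IsMinInterp n _ (twoLevel _ l₁ l₂) α)
    {β : (Fin d → Fin (2 * (n * K) + 1) → ℝ) → Fin d → ℝ}
    (hβ : ∀ W, IsMinRFSInterp n _ d W (β W)) {δ : ℝ} (hδ : 0 < δ) :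
    gaussianRows (Fin d) (twoLevel (2 * (n * K) + 1) l₁ l₂)
        {W | δ < |advRisk (rfsFun _ d W (β W)) (1 / n) -
          advRisk (fun x => ∑ j, α j * phiF _ x j) (1 / n)|} ≤
      (ENNReal.ofReal (4 * (varSqStdNormal + n) / d) + ENNReal.ofReal (400 * n / d)) /
        ENNReal.ofReal δ := by
  classical
  have : Nonempty (Fin (2 * n)) := ⟨⟨0, by omega⟩⟩
  refine (measure_mono fun W hW => ?_).trans (measure_lt_card_filter_mem_le _
    (fun j : Fin (2 * n) => gaussianRows_pos_rfsFun_le hn hd h₁ h₂ hβ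
      (averagedKernel_dipPoint_div_le hn hK h₁ h₂ hsmall j)) hδ)
  have hcells := lt_card_filter_of_lt_abs_advRisk_sub hn
    (fun j _ => hα.exists_mem_cell_nonpos hn hK h₁ h₂ hsmall j) hW
  rw [Set.mem_ofPred_eq, Fintype.card_fin]
  push_cast
  refine hcells.trans_le (Nat.cast_le.2 (Finset.card_le_card fun j hj => ?_))
  simp only [Finset.mem_filter, Finset.mem_univ, true_and] at hj ⊢
  exact hj _ (dipPoint_mem_cell hn hK j)

end ManyFeatures

section FewFeatures

variable {ι m : Type*} [Fintype ι] [Fintype m]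

/-- The density of `N(0, v)` with respect to `N(0, w)`. -/
noncomputable def gaussianRatio (v w x : ℝ) : ENNReal :=
  ENNReal.ofReal (√(w / v) * Real.exp (x ^ 2 / (2 * w) - x ^ 2 / (2 * v)))

lemma measurable_gaussianRatio (v w : ℝ) : Measurable (gaussianRatio v w) := by
  unfold gaussianRatio; fun_prop

lemma gaussianRatio_self {v : ℝ} (hv : 0 < v) (x : ℝ) : gaussianRatio v v x = 1 := by
  simp [gaussianRatio, div_self hv.ne']

lemma gaussianReal_eq_withDensity_gaussianRatio {v w : ℝ} (hv : 0 < v) (hw : 0 < w) :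
    gaussianReal 0 v.toNNReal =
      (gaussianReal 0 w.toNNReal).withDensity (gaussianRatio v w) := by
  rw [gaussianReal_of_var_ne_zero _ (Real.toNNReal_pos.2 hv).ne',
    gaussianReal_of_var_ne_zero _ (Real.toNNReal_pos.2 hw).ne',
    ← withDensity_mul _ (measurable_gaussianPDF _ _) (measurable_gaussianRatio v w)]
  congr 1
  ext x
  have hsqrt : (√(2 * Real.pi * v))⁻¹ = (√(2 * Real.pi * w))⁻¹ * √(w / v) := by
    rw [← Real.sqrt_inv, ← Real.sqrt_inv, ← Real.sqrt_mul (by positivity)]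
    congr 1
    field_simp
  have hexp : Real.exp (-x ^ 2 / (2 * v)) =
      Real.exp (-x ^ 2 / (2 * w)) * Real.exp (x ^ 2 / (2 * w) - x ^ 2 / (2 * v)) := by
    rw [← Real.exp_add]
    congr 1
    ring
  simp only [Pi.mul_apply, gaussianPDF, gaussianPDFReal, gaussianRatio, sub_zero,
    Real.coe_toNNReal _ hv.le, Real.coe_toNNReal _ hw.le]
  rw [← ENNReal.ofReal_mul (by positivity), hsqrt, hexp]
  congr 1
  ring

lemma pi_withDensity {α : ι → Type*} [∀ i, MeasurableSpace (α i)] (ν : ∀ i, Measure (α i))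
    [∀ i, IsProbabilityMeasure (ν i)] {f : ∀ i, α i → ENNReal} (hf : ∀ i, Measurable (f i))
    [∀ i, SigmaFinite ((ν i).withDensity (f i))] :
    Measure.pi (fun i => (ν i).withDensity (f i)) =
      (Measure.pi ν).withDensity fun x => ∏ i, f i (x i) := by
  refine Measure.pi_eq fun s hs => ?_
  have hind : ∀ i, Measurable ((s i).indicator (f i)) := fun i => (hf i).indicator (hs i)
  have hbox : (Set.univ.pi s).indicator (fun x => ∏ i, f i (x i)) =
      fun x => ∏ i, (s i).indicator (f i) (x i) := by
    classical
    ext x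
    by_cases hx : x ∈ Set.univ.pi s
    · rw [Set.indicator_of_mem hx]
      exact Finset.prod_congr rfl fun i _ => (Set.indicator_of_mem (hx i trivial) _).symm
    · obtain ⟨i, hi⟩ : ∃ i, x i ∉ s i := by simpa [Set.mem_pi] using hx
      rw [Set.indicator_of_notMem hx,
        Finset.prod_eq_zero (Finset.mem_univ i) (Set.indicator_of_notMem hi _)]
  have hindep : iIndepFun (fun i x => (s i).indicator (f i) (x i)) (Measure.pi ν) :=
    iIndepFun_pi fun i => (hind i).aemeasurable
  rw [withDensity_apply _ (.univ_pi hs), ← lintegral_indicator (.univ_pi hs), hbox]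
  refine (lintegral_prod_eq_prod_lintegral_of_indepFun Finset.univ _ hindep fun i =>
    (hind i).comp (measurable_pi_apply i)).trans (Finset.prod_congr rfl fun i _ => ?_)
  rw [(measurePreserving_eval ν i).lintegral_comp (hind i), lintegral_indicator (hs i),
    withDensity_apply _ (hs i)]

lemma gaussianVector_eq_withDensity {lam lam' : ι → ℝ} (h : ∀ j, 0 < lam j) (h' : ∀ j, 0 < lam' j) :
    gaussianVector lam =
      (gaussianVector lam').withDensity fun z => ∏ j, gaussianRatio (lam j) (lam' j) (z j) := by
  have hj := fun j => gaussianReal_eq_withDensity_gaussianRatio (h j) (h' j)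
  have : ∀ j, SigmaFinite
      ((gaussianReal 0 (lam' j).toNNReal).withDensity (gaussianRatio (lam j) (lam' j))) :=
    fun j => hj j ▸ inferInstance
  rw [← pi_withDensity _ fun j => measurable_gaussianRatio (lam j) (lam' j)]
  simp only [gaussianVector, hj]

lemma gaussianRows_eq_withDensity {lam lam' : ι → ℝ} (h : ∀ j, 0 < lam j) (h' : ∀ j, 0 < lam' j) :
    gaussianRows m lam = (gaussianRows m lam').withDensity
      fun W => ∏ i, ∏ j, gaussianRatio (lam j) (lam' j) (W i j) := by
  have hrow := gaussianVector_eq_withDensity h h'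
  have : SigmaFinite ((gaussianVector lam').withDensity
      fun z => ∏ j, gaussianRatio (lam j) (lam' j) (z j)) := hrow ▸ inferInstance
  have hmeas : Measurable fun z : ι → ℝ => ∏ j, gaussianRatio (lam j) (lam' j) (z j) :=
    Finset.measurable_prod _ fun j _ =>
      (measurable_gaussianRatio (lam j) (lam' j)).comp (measurable_pi_apply j)
  rw [gaussianRows, hrow, gaussianRows]
  exact pi_withDensity (fun _ : m => gaussianVector lam') fun _ => hmeas

lemma withDensity_inter_le {α : Type*} [MeasurableSpace α] (ν : Measure α) [SFinite ν]
    {f : α → ENNReal} {G : Set α} (hG : MeasurableSet G) {C : ENNReal} (hC : ∀ x ∈ G, f x ≤ C)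
    (E : Set α) : ν.withDensity f (E ∩ G) ≤ C * ν E := by
  have hae : ∀ᵐ x ∂ν.restrict (E ∩ G), f x ≤ C :=
    ae_restrict_of_ae_restrict_of_subset Set.inter_subset_right (ae_restrict_of_forall_mem hG hC)
  calc ν.withDensity f (E ∩ G) = ∫⁻ x in E ∩ G, f x ∂ν := withDensity_apply' _ _
    _ ≤ ∫⁻ _ in E ∩ G, C ∂ν := lintegral_mono_ae hae
    _ = C * ν (E ∩ G) := by rw [lintegral_const, Measure.restrict_apply_univ]
    _ ≤ C * ν E := by gcongr; exact Set.inter_subset_left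

lemma gaussianRows_le_sum_sq_le {lam : ι → ℝ} (j : ι) (hj : 0 ≤ lam j) {R : ℝ} (hR : 0 < R) :
    gaussianRows m lam {W | R ≤ ∑ i, W i j ^ 2} ≤
      ENNReal.ofReal (Fintype.card m * lam j / R) := by
  have heval : ∀ i, MeasurePreserving (fun W : m → ι → ℝ => W i j) (gaussianRows m lam)
      (gaussianReal 0 (lam j).toNNReal) := fun i =>
    (measurePreserving_eval (fun j => gaussianReal 0 (lam j).toNNReal) j).comp
      (measurePreserving_eval (fun _ : m => gaussianVector lam) i)
  have hint : ∀ i, Integrable (fun W : m → ι → ℝ => W i j ^ 2) (gaussianRows m lam) := fun i =>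
    ((memLp_sq_gaussianReal _).comp_measurePreserving (heval i)).integrable one_le_two
  have hsq : ∀ i, ∫ W : m → ι → ℝ, W i j ^ 2 ∂gaussianRows m lam = lam j := fun i => by
    rw [← Real.coe_toNNReal _ hj, ← integral_sq_gaussianReal, ← (heval i).map_eq,
      integral_map (heval i).aemeasurable (by fun_prop)]
  have hmarkov := measure_le_ofReal_integral_div (gaussianRows m lam)
    (integrable_finsetSum Finset.univ fun i _ => hint i)
    (fun W => Finset.sum_nonneg fun i _ => sq_nonneg (W i j)) hR
  rwa [integral_finsetSum _ fun i _ => hint i, Finset.sum_congr rfl fun i _ => hsq i,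
    Finset.sum_const, Finset.card_univ, nsmul_eq_mul] at hmarkov

lemma gaussianRatio_le {v w : ℝ} (hv : 0 < v) (x : ℝ) :
    gaussianRatio v w x ≤ ENNReal.ofReal (√(w / v) * Real.exp (x ^ 2 / (2 * w))) := by
  refine ENNReal.ofReal_le_ofReal (mul_le_mul_of_nonneg_left (Real.exp_le_exp.2 ?_) (by positivity))
  exact sub_le_self _ (by positivity)

lemma prod_gaussianRatio_le {lam lam' : ι → ℝ} (h : ∀ j, 0 < lam j) {j₀ : ι}
    (hlam : ∀ j ≠ j₀, lam j = lam' j) (W : m → ι → ℝ) :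
    ∏ i, ∏ j, gaussianRatio (lam j) (lam' j) (W i j) ≤
      ENNReal.ofReal (√(lam' j₀ / lam j₀) ^ Fintype.card m *
        Real.exp ((∑ i, W i j₀ ^ 2) / (2 * lam' j₀))) :=
  calc ∏ i, ∏ j, gaussianRatio (lam j) (lam' j) (W i j)
      = ∏ i, gaussianRatio (lam j₀) (lam' j₀) (W i j₀) :=
        Finset.prod_congr rfl fun i _ => Fintype.prod_eq_single j₀ fun j hj => by
          rw [← hlam j hj, gaussianRatio_self (h j)]
    _ ≤ ∏ i, ENNReal.ofReal (√(lam' j₀ / lam j₀) * Real.exp (W i j₀ ^ 2 / (2 * lam' j₀))) :=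
        Finset.prod_le_prod' fun i _ => gaussianRatio_le (h j₀) _
    _ = _ := by
        rw [← ENNReal.ofReal_prod_of_nonneg fun i _ => by positivity, Finset.prod_mul_distrib,
          Finset.prod_const, Finset.card_univ, ← Real.exp_sum, Finset.sum_div]

/- Off the event that the `j₀`-th column is large, the density between the two laws is bounded. -/
lemma gaussianRows_le_of_eq_of_ne {lam lam' : ι → ℝ} (h : ∀ j, 0 < lam j) (h' : ∀ j, 0 < lam' j)
    {j₀ : ι} (hlam : ∀ j ≠ j₀, lam j = lam' j) {R : ℝ} (hR : 0 < R) (E : Set (m → ι → ℝ)) :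
    gaussianRows m lam E ≤ ENNReal.ofReal (Fintype.card m * lam j₀ / R) +
      ENNReal.ofReal (√(lam' j₀ / lam j₀) ^ Fintype.card m * Real.exp (R / (2 * lam' j₀))) *
        gaussianRows m lam' E := by
  set G : Set (m → ι → ℝ) := {W | ∑ i, W i j₀ ^ 2 < R}
  have hG : MeasurableSet G := measurableSet_lt (by fun_prop) measurable_const
  have hsplit : E ⊆ {W | R ≤ ∑ i, W i j₀ ^ 2} ∪ E ∩ G := fun W hW =>
    (le_or_gt R (∑ i, W i j₀ ^ 2)).imp id fun hlt => ⟨hW, hlt⟩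
  refine (measure_mono hsplit).trans ((measure_union_le _ _).trans
    (add_le_add (gaussianRows_le_sum_sq_le j₀ (h j₀).le hR) ?_))
  rw [gaussianRows_eq_withDensity h h']
  refine withDensity_inter_le _ hG (fun W hW => (prod_gaussianRatio_le h hlam W).trans ?_) E
  have hpos := h' j₀
  gcongr
  exact le_of_lt hW

lemma two_pow_mul_gaussianRows_hasPositiveCombination_le {κ : Type*} [Fintype κ] (lam : ι → ℝ)
    (a : κ → ι → ℝ) (h : Pairwise fun k l => ⟪sqrtCov lam (a k), sqrtCov lam (a l)⟫ = 0) :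
    2 ^ Fintype.card κ *
        gaussianRows m lam {W | HasPositiveCombination fun i k => W i ⬝ᵥ a k} ≤
      ((Fintype.card κ + 1 : ℕ) : ENNReal) ^ Fintype.card m := by
  have hmp := measurePreserving_pi _ _ fun _ : m => measurePreserving_pi_dotProduct lam a h
  refine (congrArg _ (hmp.measure_preimage
    measurableSet_hasPositiveCombination.nullMeasurableSet)).trans_le
    (two_pow_mul_measure_hasPositiveCombination_le _ fun k => ⟨measurable_neg, ?_⟩)
  rw [gaussianReal_map_neg, neg_zero]

end FewFeatures

section FewFeaturesRisk

variable {n K d : ℕ} {l₁ l₂ : ℝ}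

lemma gaussianRows_exists_pos_on_cells_le (n K d : ℕ) {l : ℝ} (hl : 0 ≤ l)
    (J : Finset (Fin (2 * n))) :
    gaussianRows (Fin d) (fun _ : Fin (2 * (n * K) + 1) => l)
        {W | ∃ β, ∀ j ∈ J, ∀ y ∈ cell n j, 0 < rfsFun _ d W β y} ≤
      ENNReal.ofReal ((2 * (n * K) + 1 : ℝ) ^ d / 2 ^ (J.card * K)) := by
  let a : J × Fin K → Fin (2 * (n * K) + 1) → ℝ := fun k =>
    phiF _ (xtr _ (gridIndex n K (k.1, k.2)))
  have hinj : Function.Injective fun k : J × Fin K => gridIndex n K (k.1, k.2) :=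
    (gridIndex_injective n K).comp (Subtype.val_injective.prodMap Function.injective_id)
  have hcount := two_pow_mul_gaussianRows_hasPositiveCombination_le (m := Fin d) (fun _ => l) a
    ((pairwise_inner_sqrtCov_phiF_xtr (n * K) hl).comp_of_injective hinj)
  rw [Fintype.card_prod, Fintype.card_coe, Fintype.card_fin, Fintype.card_fin] at hcount
  have hcard : J.card * K + 1 ≤ 2 * (n * K) + 1 := by
    have := Nat.mul_le_mul_right K (J.card_le_univ.trans_eq (Fintype.card_fin _))
    rwa [mul_assoc, ← Nat.succ_le_succ_iff] at this
  rw [ENNReal.ofReal_div_of_pos (by positivity), ENNReal.le_div_iff_mul_le (by simp) (by simp),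
    mul_comm]
  calc ENNReal.ofReal (2 ^ (J.card * K)) * _
      ≤ 2 ^ (J.card * K) * gaussianRows (Fin d) (fun _ : Fin (2 * (n * K) + 1) => l)
          {W | HasPositiveCombination fun i k => W i ⬝ᵥ a k} := by
        rw [ENNReal.ofReal_pow zero_le_two, ENNReal.ofReal_ofNat]
        gcongr
        rintro ⟨β, hβ⟩
        exact ⟨β, fun k => hβ k.1 k.1.2 _ (xtr_gridIndex_mem_cell (k.1.1, k.2))⟩
    _ ≤ ((J.card * K + 1 : ℕ) : ENNReal) ^ d := hcount
    _ ≤ ((2 * (n * K) + 1 : ℕ) : ENNReal) ^ d := by gcongr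
    _ = _ := by
        rw [ENNReal.ofReal_pow (by positivity), ← ENNReal.ofReal_natCast]
        push_cast
        rfl

open Classical in
lemma gaussianRows_exists_lt_card_filter_pos_le (n K d : ℕ) {l : ℝ} (hl : 0 ≤ l) (δ : ℝ) :
    gaussianRows (Fin d) (fun _ : Fin (2 * (n * K) + 1) => l)
        {W | ∃ β, δ * (2 * n) < (Finset.univ.filter fun j : Fin (2 * n) =>
          ∀ y ∈ cell n j, 0 < rfsFun _ d W β y).card} ≤
      ENNReal.ofReal (2 ^ (2 * n) * (2 * (n * K) + 1 : ℝ) ^ d *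
        Real.exp (-(δ * (2 * n) * K * Real.log 2))) := by
  set 𝒥 : Finset (Finset (Fin (2 * n))) := Finset.univ.filter fun J => δ * (2 * n) < J.card
  have hcover : {W : Fin d → Fin (2 * (n * K) + 1) → ℝ | ∃ β, δ * (2 * n) <
        (Finset.univ.filter fun j : Fin (2 * n) =>
          ∀ y ∈ cell n j, 0 < rfsFun _ d W β y).card} ⊆
      ⋃ J ∈ 𝒥, {W | ∃ β, ∀ j ∈ J, ∀ y ∈ cell n j, 0 < rfsFun _ d W β y} := by
    rintro W ⟨β, hβ⟩
    exact Set.mem_biUnion (Finset.mem_coe.2 (Finset.mem_filter.2 ⟨Finset.mem_univ _, hβ⟩))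
      ⟨β, fun j hj => (Finset.mem_filter.1 hj).2⟩
  have hcell : ∀ J ∈ 𝒥, gaussianRows (Fin d) (fun _ : Fin (2 * (n * K) + 1) => l)
        {W | ∃ β, ∀ j ∈ J, ∀ y ∈ cell n j, 0 < rfsFun _ d W β y} ≤
      ENNReal.ofReal ((2 * (n * K) + 1 : ℝ) ^ d *
        Real.exp (-(δ * (2 * n) * K * Real.log 2))) := fun J hJ => by
    refine (gaussianRows_exists_pos_on_cells_le n K d hl J).trans (ENNReal.ofReal_le_ofReal ?_)
    have hpow : ((2 : ℝ) ^ (J.card * K))⁻¹ = Real.exp (-(J.card * K * Real.log 2)) := by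
      rw [Real.exp_neg, ← Nat.cast_mul, Real.exp_nat_mul, Real.exp_log two_pos]
    rw [div_eq_mul_inv, hpow]
    gcongr
    exact (Finset.mem_filter.1 hJ).2.le
  refine (measure_mono hcover).trans ((measure_biUnion_finset_le _ _).trans
    ((Finset.sum_le_card_nsmul _ _ _ hcell).trans ?_))
  have hcard : 𝒥.card ≤ 2 ^ (2 * n) := 𝒥.card_le_univ.trans_eq (by simp)
  rw [← ENNReal.ofReal_nsmul, nsmul_eq_mul, mul_assoc (2 ^ (2 * n))]
  gcongr
  exact_mod_cast hcard

lemma few_features_bound_le_exp {c δ a : ℝ} (hd : d ≤ n * c) (ha : 0 ≤ a)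
    (hB : √(l₂ / l₁) * (2 * (n * K) + 1) ≤ Real.exp a)
    (hδ : c * (a + c * (l₁ / (2 * l₂))) + 3 ≤ 2 * δ * K * Real.log 2) :
    √(l₂ / l₁) ^ d * Real.exp (c * (n * c) * l₁ / (2 * l₂)) *
        (2 ^ (2 * n) * (2 * (n * K) + 1 : ℝ) ^ d *
          Real.exp (-(δ * (2 * n) * K * Real.log 2))) ≤ Real.exp (-n) := by
  have htwo : (2 : ℝ) ^ (2 * n) ≤ Real.exp (2 * n) :=
    calc (2 : ℝ) ^ (2 * n) ≤ Real.exp 1 ^ (2 * n) := by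
          gcongr
          linarith [Real.add_one_le_exp 1]
      _ = Real.exp (2 * n) := by rw [← Real.exp_nat_mul]; push_cast; rw [mul_one]
  have hpow : (√(l₂ / l₁) * (2 * (n * K) + 1)) ^ d ≤ Real.exp (n * c * a) :=
    calc (√(l₂ / l₁) * (2 * (n * K) + 1)) ^ d ≤ Real.exp a ^ d := by gcongr
      _ = Real.exp (d * a) := (Real.exp_nat_mul a d).symm
      _ ≤ Real.exp (n * c * a) := by gcongr
  calc _ = (√(l₂ / l₁) * (2 * (n * K) + 1)) ^ d * 2 ^ (2 * n) *
        Real.exp (c * (n * c) * l₁ / (2 * l₂) - δ * (2 * n) * K * Real.log 2) := by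
        rw [mul_pow, sub_eq_add_neg, Real.exp_add]; ring
    _ ≤ Real.exp (n * c * a) * Real.exp (2 * n) *
        Real.exp (c * (n * c) * l₁ / (2 * l₂) - δ * (2 * n) * K * Real.log 2) := by gcongr
    _ = Real.exp (n * (c * (a + c * (l₁ / (2 * l₂))) + 2 - 2 * δ * K * Real.log 2)) := by
        rw [← Real.exp_add, ← Real.exp_add]; congr 1; ring
    _ ≤ Real.exp (-n) := by
        refine Real.exp_le_exp.2 ?_
        rw [← mul_neg_one (n : ℝ)]
        gcongr
        linarith

lemma gaussianRows_lt_abs_advRisk_sub_le_of_le (hn : 0 < n) (hK : 0 < K) (h₁ : 0 < l₁)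
    (h₂ : 0 < l₂) (hsmall : l₁ / 2 ≤ l₂ * K / 20) {α : Fin (2 * (n * K) + 1) → ℝ}
    (hα : IsMinInterp n _ (twoLevel _ l₁ l₂) α)
    (β : (Fin d → Fin (2 * (n * K) + 1) → ℝ) → Fin d → ℝ) {c δ a : ℝ} (hc : 0 < c)
    (hd : d ≤ n * c) (ha : 0 ≤ a) (hB : √(l₂ / l₁) * (2 * (n * K) + 1) ≤ Real.exp a)
    (hδ : c * (a + c * (l₁ / (2 * l₂))) + 3 ≤ 2 * δ * K * Real.log 2) :
    gaussianRows (Fin d) (twoLevel (2 * (n * K) + 1) l₁ l₂)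
        {W | δ < |advRisk (rfsFun _ d W (β W)) (1 / n) -
          advRisk (fun x => ∑ j, α j * phiF _ x j) (1 / n)|} ≤
      ENNReal.ofReal (1 / c) + ENNReal.ofReal (Real.exp (-n)) := by
  classical
  have : (0 : ℝ) < n := by exact_mod_cast hn
  have hcells : {W | δ < |advRisk (rfsFun _ d W (β W)) (1 / n) -
        advRisk (fun x => ∑ j, α j * phiF _ x j) (1 / n)|} ⊆
      {W | ∃ β, δ * (2 * n) < (Finset.univ.filter fun j : Fin (2 * n) =>
        ∀ y ∈ cell n j, 0 < rfsFun _ d W β y).card} := fun W hW =>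
    ⟨β W, lt_card_filter_of_lt_abs_advRisk_sub hn
      (fun j _ => hα.exists_mem_cell_nonpos hn hK h₁ h₂ hsmall j) hW⟩
  refine (gaussianRows_le_of_eq_of_ne (lam' := fun _ => l₂) (j₀ := 0) (twoLevel_pos h₁ h₂)
    (fun _ => h₂) (fun j hj => if_neg (Fin.val_ne_zero_iff.2 hj))
    (R := c * (n * c) * l₁) (by positivity) _).trans (add_le_add ?_ ?_)
  · refine ENNReal.ofReal_le_ofReal ?_
    rw [Fintype.card_fin, show twoLevel (2 * (n * K) + 1) l₁ l₂ 0 = l₁ from if_pos rfl,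
      div_le_div_iff₀ (by positivity) hc]
    calc d * l₁ * c ≤ n * c * l₁ * c := by gcongr
      _ = 1 * (c * (n * c) * l₁) := by ring
  · refine (mul_le_mul_right ((measure_mono hcells).trans
      (gaussianRows_exists_lt_card_filter_pos_le n K d h₂.le δ)) _).trans ?_
    rw [← ENNReal.ofReal_mul (by positivity), Fintype.card_fin,
      show twoLevel (2 * (n * K) + 1) l₁ l₂ 0 = l₁ from if_pos rfl]
    exact ENNReal.ofReal_le_ofReal (few_features_bound_le_exp hd ha hB hδ)

end FewFeaturesRisk

section Bilevel

variable {n K d B : ℕ} {p q x δ : ℝ}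

lemma ofReal_div_add_ofReal_div_le (hn : 0 < n) (hx : 0 < x) (hd : n * x ≤ d) :
    ENNReal.ofReal (4 * (varSqStdNormal + n) / d) + ENNReal.ofReal (400 * n / d) ≤
      ENNReal.ofReal ((4 * varSqStdNormal + 404) / x) := by
  have hn' : (1 : ℝ) ≤ n := by exact_mod_cast hn
  have hV : 0 ≤ varSqStdNormal := variance_nonneg _ _
  rw [← ENNReal.ofReal_add (by positivity) (by positivity), ← add_div]
  refine ENNReal.ofReal_le_ofReal ?_
  calc (4 * (varSqStdNormal + n) + 400 * n) / d
      ≤ (n * (4 * varSqStdNormal + 404)) / (n * x) :=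
        div_le_div₀ (by positivity) (by nlinarith) (by positivity) hd
    _ = _ := mul_div_mul_left _ _ (by positivity)

lemma BilevelB.exists_eq (h : BilevelB n B p) : ∃ K, B = 2 * (n * K) + 1 := by
  obtain ⟨hodd, ⟨K, hK⟩, -⟩ := h
  have := hodd.pos
  exact ⟨K, by rw [mul_assoc] at hK; omega⟩

lemma BilevelB.le_rpow (h : BilevelB n B p) (hn : 2 ≤ n) (hp : 1 ≤ p) :
    (B : ℝ) ≤ (n : ℝ) ^ (p + 1) := by
  have hn' : (2 : ℝ) ≤ n := by exact_mod_cast hn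
  have hle : (n : ℝ) ≤ (n : ℝ) ^ p := Real.self_le_rpow_of_one_le (by linarith) hp
  rw [Real.rpow_add_one (by positivity)]
  nlinarith [(abs_le.1 h.2.2).2]

lemma BilevelB.rpow_le (h : BilevelB n (2 * (n * K) + 1) p) (hn : 0 < n)
    (hp : 4 ≤ (n : ℝ) ^ (p - 1)) : (n : ℝ) ^ (p - 1) ≤ 4 * K := by
  have hn' : (1 : ℝ) ≤ n := by exact_mod_cast hn
  have hlo := (abs_le.1 h.2.2).1
  rw [← sub_add_cancel p 1, Real.rpow_add_one (by positivity)] at hlo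
  push_cast at hlo
  refine le_of_mul_le_mul_right ?_ (zero_lt_one.trans_le hn')
  nlinarith

lemma bilevelLam_eq_twoLevel (n K : ℕ) (q : ℝ) : bilevelLam n (2 * (n * K) + 1) q =
    twoLevel _ ((n : ℝ) ^ (-q) * (2 * (n * K) + 1))
      ((1 - (n : ℝ) ^ (-q)) * (2 * (n * K) + 1) / (2 * (n * K))) := by
  ext j
  simp only [bilevelLam, twoLevel]
  push_cast
  rw [add_sub_cancel_right]

lemma rpow_neg_mul_self_le (hn : 0 < n) (hx : 0 < x) (hxq : x ^ 3 ≤ (n : ℝ) ^ (q - 1)) :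
    (n : ℝ) ^ (-q) * n ≤ 1 / x ^ 3 := by
  have hn' : (0 : ℝ) < n := by exact_mod_cast hn
  rw [← Real.rpow_add_one hn'.ne', show -q + 1 = -(q - 1) by ring, Real.rpow_neg hn'.le, one_div]
  gcongr

lemma bilevel_fst_le {γ : ℝ} (hn : 0 < n) (hK : 0 < K) (hγn : γ * n ≤ 1 / 40) :
    γ * (2 * (n * K) + 1) / 2 ≤ (1 - γ) * (2 * (n * K) + 1) / (2 * (n * K)) * K / 20 := by
  have hn' : (1 : ℝ) ≤ n := by exact_mod_cast hn
  have : (0 : ℝ) < K := by exact_mod_cast hK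
  calc γ * (2 * (n * K) + 1) / 2 = (2 * (n * K) + 1) / (40 * n) * (20 * (γ * n)) := by
        field_simp; ring
    _ ≤ (2 * (n * K) + 1) / (40 * n) * (1 - γ) := by
        gcongr
        nlinarith
    _ = _ := by field_simp; ring

lemma sqrt_bilevel_ratio_mul_le (hn : 2 ≤ n) (hK : 0 < K) (hp : 1 ≤ p) (hq : 0 < q)
    (hB : BilevelB n (2 * (n * K) + 1) p) :
    √((1 - (n : ℝ) ^ (-q)) * (2 * (n * K) + 1) / (2 * (n * K)) /
        ((n : ℝ) ^ (-q) * (2 * (n * K) + 1))) * (2 * (n * K) + 1) ≤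
      Real.exp ((p + q + 1) * Real.log n) := by
  have hn' : (2 : ℝ) ≤ n := by exact_mod_cast hn
  have hn₀ : (0 : ℝ) < n := by linarith
  have hK' : (1 : ℝ) ≤ K := by exact_mod_cast hK
  have hγ : 0 < (n : ℝ) ^ (-q) := by positivity
  have hnq : 1 ≤ (n : ℝ) ^ q := Real.one_le_rpow (by linarith) hq.le
  have hratio : (1 - (n : ℝ) ^ (-q)) * (2 * (n * K) + 1) / (2 * (n * K)) /
      ((n : ℝ) ^ (-q) * (2 * (n * K) + 1)) ≤ ((n : ℝ) ^ q) ^ 2 := by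
    calc _ = ((n : ℝ) ^ (-q))⁻¹ * ((1 - (n : ℝ) ^ (-q)) / (2 * (n * K))) := by field_simp
      _ ≤ (n : ℝ) ^ q * 1 := by
          rw [Real.rpow_neg hn₀.le, inv_inv, ← Real.rpow_neg hn₀.le]
          gcongr
          rw [div_le_one (by positivity)]
          nlinarith
      _ ≤ ((n : ℝ) ^ q) ^ 2 := by nlinarith
  calc _ ≤ (n : ℝ) ^ q * (n : ℝ) ^ (p + 1) := by
        gcongr
        · exact Real.sqrt_le_iff.2 ⟨by positivity, hratio⟩
        · exact_mod_cast hB.le_rpow hn hp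
    _ = _ := by
        rw [← Real.rpow_add hn₀, Real.rpow_def_of_pos hn₀, mul_comm (Real.log n)]
        ring_nf

lemma few_features_bilevel_le {L γ : ℝ} (hn : 0 < n) (hK : 0 < K) (hγn : γ * n ≤ 1 / x ^ 3)
    (hγ_half : γ ≤ 1 / 2) (hx : 1 ≤ x) (hxK : x ^ 3 ≤ 4 * K)
    (hL : 0 ≤ L) (hxδ : 4 * L + 14 ≤ 2 * δ * Real.log 2 * x) :
    x * (L * x + x * (γ * (2 * (n * K) + 1) /
        (2 * ((1 - γ) * (2 * (n * K) + 1) / (2 * (n * K)))))) + 3 ≤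
      2 * δ * K * Real.log 2 := by
  have : (1 : ℝ) ≤ n := by exact_mod_cast hn
  have : (0 : ℝ) < K := by exact_mod_cast hK
  have hγ' : 0 < 1 - γ := by linarith
  have hratio : γ * (2 * (n * K) + 1) / (2 * ((1 - γ) * (2 * (n * K) + 1) / (2 * (n * K)))) ≤
      2 * K / x ^ 3 :=
    calc _ = γ * n * K / (1 - γ) := by field_simp
      _ ≤ 1 / x ^ 3 * K / (1 / 2) := by
          gcongr
          linarith
      _ = 2 * K / x ^ 3 := by ring
  have hxx : x ^ 2 ≤ 4 * K / x := by rw [le_div_iff₀ (by positivity)]; linarith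
  have hone : 1 ≤ 4 * K / x := hxx.trans' (one_le_pow₀ hx)
  calc _ ≤ x * (L * x + x * (2 * K / x ^ 3)) + 3 := by gcongr
    _ = L * x ^ 2 + 2 * K / x + 3 := by field_simp
    _ ≤ L * (4 * K / x) + 2 * K / x + 3 * (4 * K / x) := by
        gcongr
        linarith
    _ = K * ((4 * L + 14) / x) := by ring
    _ ≤ K * (2 * δ * Real.log 2) := by
        gcongr
        rwa [div_le_iff₀ (by positivity)]
    _ = _ := by ring

lemma gaussianRows_lt_abs_advRisk_sub_le_bilevel {γ L : ℝ} (hn : 0 < n) (hK : 0 < K)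
    (hγ : 0 < γ) (hγn : γ * n ≤ 1 / x ^ 3) (hx : 4 ≤ x) (hxK : x ^ 3 ≤ 4 * K)
    {l₁ l₂ : ℝ} (hl₁ : l₁ = γ * (2 * (n * K) + 1))
    (hl₂ : l₂ = (1 - γ) * (2 * (n * K) + 1) / (2 * (n * K)))
    {α : Fin (2 * (n * K) + 1) → ℝ} (hα : IsMinInterp n _ (twoLevel _ l₁ l₂) α)
    {β : (Fin d → Fin (2 * (n * K) + 1) → ℝ) → Fin d → ℝ}
    (hβ : ∀ W, IsMinRFSInterp n _ d W (β W)) (hδ : 0 < δ) (hL : 0 ≤ L)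
    (hB : √(l₂ / l₁) * (2 * (n * K) + 1) ≤ Real.exp (L * x))
    (hxδ : 4 * L + 14 ≤ 2 * δ * Real.log 2 * x) :
    gaussianRows (Fin d) (twoLevel (2 * (n * K) + 1) l₁ l₂)
        {W | δ < |advRisk (rfsFun _ d W (β W)) (1 / n) -
          advRisk (fun x => ∑ j, α j * phiF _ x j) (1 / n)|} ≤
      ENNReal.ofReal (1 / x) + ENNReal.ofReal (Real.exp (-n)) +
        ENNReal.ofReal ((4 * varSqStdNormal + 404) / x) / ENNReal.ofReal δ := by
  subst hl₁ hl₂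
  have hn' : (1 : ℝ) ≤ n := by exact_mod_cast hn
  have : (0 : ℝ) < K := by exact_mod_cast hK
  have hx₀ : 0 < x := by linarith
  have hγn' : γ * n ≤ 1 / 40 :=
    calc γ * n ≤ 1 / 4 ^ 3 := hγn.trans (by gcongr)
      _ ≤ 1 / 40 := by norm_num
  have hγ_half : γ ≤ 1 / 2 := by nlinarith
  have h₁ : 0 < γ * (2 * (n * K) + 1) := by positivity
  have h₂ : 0 < (1 - γ) * (2 * (n * K) + 1) / (2 * (n * K)) :=
    div_pos (mul_pos (by linarith) (by positivity)) (by positivity)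
  have hsmall := bilevel_fst_le hn hK hγn'
  rcases le_or_gt (d : ℝ) (n * x) with hd | hd
  · exact (gaussianRows_lt_abs_advRisk_sub_le_of_le hn hK h₁ h₂ hsmall hα β hx₀ hd
      (by positivity) hB (few_features_bilevel_le hn hK hγn hγ_half (by linarith) hxK hL
        hxδ)).trans le_self_add
  · have hd₀ : 0 < d := by exact_mod_cast hd.trans' (show 0 < n * x by positivity)
    refine (gaussianRows_lt_abs_advRisk_sub_le_of_isMinRFSInterp hn hK hd₀ h₁ h₂ hsmall hα hβ
      hδ).trans (le_add_left ?_)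
    gcongr
    exact ofReal_div_add_ofReal_div_le hn hx₀ hd.le

lemma rfsMeasure_lt_abs_advRisk_sub_le (hn : 2 ≤ n) (hp : 1 ≤ p) (hq : 0 < q)
    (hB : BilevelB n B p) {α : Fin B → ℝ} (hα : IsMinInterp n B (bilevelLam n B q) α)
    {β : (Fin d → Fin B → ℝ) → Fin d → ℝ} (hβ : ∀ W, IsMinRFSInterp n B d W (β W)) (hδ : 0 < δ)
    (hx : 4 ≤ x) (hxp : x ^ 3 ≤ (n : ℝ) ^ (p - 1)) (hxq : x ^ 3 ≤ (n : ℝ) ^ (q - 1))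
    (hlog : Real.log n ≤ x) (hxδ : 4 * (p + q + 1) + 14 ≤ 2 * δ * Real.log 2 * x) :
    rfsMeasure n B d q {W | δ < |advRisk (rfsFun B d W (β W)) (1 / n) -
        advRisk (fun x => ∑ j, α j * phiF B x j) (1 / n)|} ≤
      ENNReal.ofReal (1 / x) + ENNReal.ofReal (Real.exp (-n)) +
        ENNReal.ofReal ((4 * varSqStdNormal + 404) / x) / ENNReal.ofReal δ := by
  obtain ⟨K, rfl⟩ := hB.exists_eq
  have hn₀ : 0 < n := by omega
  have hx64 : 4 ^ 3 ≤ x ^ 3 := by gcongr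
  have hxK : x ^ 3 ≤ 4 * K := hxp.trans (hB.rpow_le hn₀ (by linarith))
  have hK : 0 < K := by
    have : (0 : ℝ) < K := by linarith
    exact_mod_cast this
  rw [bilevelLam_eq_twoLevel] at hα
  change gaussianRows (Fin d) (bilevelLam n _ q) _ ≤ _
  rw [bilevelLam_eq_twoLevel]
  refine gaussianRows_lt_abs_advRisk_sub_le_bilevel hn₀ hK (by positivity)
    (rpow_neg_mul_self_le hn₀ (by linarith) hxq) hx hxK rfl rfl hα hβ hδ (by positivity)
    ((sqrt_bilevel_ratio_mul_le hn hK hp hq hB).trans (Real.exp_le_exp.2 ?_)) hxδ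
  gcongr

lemma exists_rpow_scale (hp : 1 < p) (hq : 1 < q) : ∃ s : ℝ, 0 < s ∧ ∀ n : ℕ, 0 < n →
    ((n : ℝ) ^ s) ^ 3 ≤ (n : ℝ) ^ (p - 1) ∧ ((n : ℝ) ^ s) ^ 3 ≤ (n : ℝ) ^ (q - 1) := by
  refine ⟨(min p q - 1) / 3, by have := lt_min hp hq; linarith, fun n hn => ?_⟩
  have hn' : (1 : ℝ) ≤ n := by exact_mod_cast hn
  have hcube : ((n : ℝ) ^ ((min p q - 1) / 3)) ^ 3 = (n : ℝ) ^ (min p q - 1) := by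
    rw [← Real.rpow_natCast, ← Real.rpow_mul (by positivity)]
    congr 1
    push_cast
    ring
  rw [hcube]
  exact ⟨by gcongr; exact min_le_left p q, by gcongr; exact min_le_right p q⟩

lemma tendsto_risk_bound {x : ℕ → ℝ} (hx : Tendsto x atTop atTop) (C : ℝ) (hδ : 0 < δ) :
    Tendsto (fun n : ℕ => ENNReal.ofReal (1 / x n) + ENNReal.ofReal (Real.exp (-n)) +
      ENNReal.ofReal (C / x n) / ENNReal.ofReal δ) atTop (nhds 0) := by
  have hdiv : ∀ C : ℝ, Tendsto (fun n => ENNReal.ofReal (C / x n)) atTop (nhds 0) := fun C => by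
    simpa using ENNReal.tendsto_ofReal (hx.const_div_atTop C)
  have hexp : Tendsto (fun n : ℕ => ENNReal.ofReal (Real.exp (-n))) atTop (nhds 0) := by
    simpa using ENNReal.tendsto_ofReal
      (Real.tendsto_exp_neg_atTop_nhds_zero.comp tendsto_natCast_atTop_atTop)
  simpa using ((hdiv 1).add hexp).add
    (ENNReal.Tendsto.div_const (hdiv C) (Or.inr (ENNReal.ofReal_pos.2 hδ).ne'))

end Bilevel

theorem stmt_10_general (p q : ℝ) (hp : 1 < p) (hq : 1 < q) (B d : ℕ → ℕ)
    (hB : ∀ n : ℕ, 2 ≤ n → BilevelB n (B n) p)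
    (αhat : (n : ℕ) → Fin (B n) → ℝ)
    (hα : ∀ n : ℕ, 2 ≤ n → IsMinInterp n (B n) (bilevelLam n (B n) q) (αhat n))
    (βhat : (n : ℕ) → (Fin (d n) → Fin (B n) → ℝ) → Fin (d n) → ℝ)
    (hβ : ∀ n : ℕ, 2 ≤ n → ∀ W : Fin (d n) → Fin (B n) → ℝ,
      IsMinRFSInterp n (B n) (d n) W (βhat n W)) {δ : ℝ} (hδ : 0 < δ) :
    Tendsto (fun n : ℕ =>
        rfsMeasure n (B n) (d n) q
          {W | δ < |advRisk (rfsFun (B n) (d n) W (βhat n W)) (1 / (n : ℝ)) -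
              advRisk (fun x => ∑ j, αhat n j * phiF (B n) x j) (1 / (n : ℝ))|})
      atTop (nhds 0) := by
  obtain ⟨s, hs, hscale⟩ := exists_rpow_scale hp hq
  have hx : Tendsto (fun n : ℕ => (n : ℝ) ^ s) atTop atTop :=
    (tendsto_rpow_atTop hs).comp tendsto_natCast_atTop_atTop
  have hlog : ∀ᶠ n : ℕ in atTop, Real.log n ≤ (n : ℝ) ^ s := by
    filter_upwards [tendsto_natCast_atTop_atTop.eventually
      ((isLittleO_log_rpow_atTop hs).bound one_pos)] with n hn
    rw [one_mul, Real.norm_of_nonneg (Real.rpow_nonneg n.cast_nonneg s)] at hn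
    exact (Real.le_norm_self _).trans hn
  have hlarge := (hx.const_mul_atTop (show 0 < 2 * δ * Real.log 2 by positivity)
    ).eventually_ge_atTop (4 * (p + q + 1) + 14)
  refine tendsto_of_tendsto_of_tendsto_of_le_of_le' tendsto_const_nhds
    (tendsto_risk_bound hx (4 * varSqStdNormal + 404) hδ) (Eventually.of_forall fun _ => zero_le) ?_
  filter_upwards [eventually_ge_atTop 2, hx.eventually_ge_atTop 4, hlog, hlarge]
    with n hn hx4 hlogn hxδ
  obtain ⟨hxp, hxq⟩ := hscale n (by omega)
  exact rfsMeasure_lt_abs_advRisk_sub_le hn hp.le (by linarith) (hB n hn) (hα n hn) (hβ n hn) hδ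
    hx4 hxp hxq hlogn hxδ

/-- **RFS adversarial risk converges to the Fourier adversarial risk.**  Fix `p, q > 1`
and `T > 6p + 1 - 2q`.  With `d = n^T` RFS features whose Gaussian weight vectors are
i.i.d. `N(0, Σ(n,p,q))`, the adversarial risk at radius `1/n` of the minimum-`ℓ₂`-norm RFS
interpolator `ĝ_n` converges in probability to that of the Fourier interpolator `f̂_n`:
for every `δ > 0`, `P(|C_adv(ĝ_n, 1/n) - C_adv(f̂_n, 1/n)| > δ) → 0` as `n → ∞`. -/
theorem stmt_10 (p q T : ℝ) (hp : 1 < p) (hq : 1 < q) (hT : 6 * p + 1 - 2 * q < T)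
    (B d : ℕ → ℕ)
    (hB : ∀ n : ℕ, 2 ≤ n → BilevelB n (B n) p)
    (hd : ∀ n : ℕ, 2 ≤ n → |(d n : ℝ) - (n : ℝ) ^ T| ≤ 1)
    (αhat : (n : ℕ) → Fin (B n) → ℝ)
    (hα : ∀ n : ℕ, 2 ≤ n → IsMinInterp n (B n) (bilevelLam n (B n) q) (αhat n))
    (βhat : (n : ℕ) → (Fin (d n) → Fin (B n) → ℝ) → Fin (d n) → ℝ)
    (hβ : ∀ n : ℕ, 2 ≤ n → ∀ W : Fin (d n) → Fin (B n) → ℝ,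
      (∃ β, RFSInterpolates n (B n) (d n) W β) →
        RFSInterpolates n (B n) (d n) W (βhat n W) ∧
        ∀ β : Fin (d n) → ℝ, RFSInterpolates n (B n) (d n) W β →
          ∑ i, (βhat n W i) ^ 2 ≤ ∑ i, (β i) ^ 2) :
    ∀ δ : ℝ, 0 < δ →
      Tendsto (fun n : ℕ =>
          rfsMeasure n (B n) (d n) q
            {W | δ < |advRisk (rfsFun (B n) (d n) W (βhat n W)) (1 / (n : ℝ)) -
                advRisk (fun x => ∑ j, αhat n j * phiF (B n) x j) (1 / (n : ℝ))|})
        atTop (nhds 0) :=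
  fun _ hδ => stmt_10_general p q hp hq B d hB αhat hα βhat hβ hδ
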